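/- arXiv:2102.04397 — 6 statements merged into one kernel-verified Lean document; each statement's English description precedes it below -/
import Mathlib

section
/- Let Γ ⊂ X×Y be a nonempty c-cyclically monotone set and define I(x,y) := sup_{k≥2} sup_{(x_i,y_i)_{i=2}^k ⊂ Γ} sup_{σ ∈ Σ(k)} [Σ_{i=1}^k c(x_i,y_i) − Σ_{i=1}^k c(x_i,y_{σ(i)})], where (x_1,y_1) := (x,y) and Σ(k) is the set of permutations of {1,…,k}. Then I: X×Y → [0,∞] is lower semicontinuous, I = 0 on Γ, and I(x,y) ≥ sup_{k≥2} sup_{(x_i,y_i)_{i=2}^k ⊂ Γ} [Σ_{i=1}^k c(x_i,y_i) − Σ_{i=1}^k c(x_i,y_{i+1})] (with y_{k+1} := y_1), with equality as soon as x ∈ proj_X Γ or y ∈ proj_Y Γ. -/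
open MeasureTheory Filter Topology Set
open scoped ENNReal

noncomputable section

namespace EOT

variable {X Y : Type*}

/-- A coupling of `μ` and `ν`: a probability measure on the product with the given marginals. -/
def IsCoupling [MeasurableSpace X] [MeasurableSpace Y]
    (μ : Measure X) (ν : Measure Y) (π : Measure (X × Y)) : Prop :=
  IsProbabilityMeasure π ∧ π.map Prod.fst = μ ∧ π.map Prod.snd = ν

/-- `(c,ε)`-cyclical invariance: `π` is equivalent to `P = μ ⊗ ν`, with a positive version of the
density satisfying the cyclical identity for all `k` points. -/
def IsCyclInvariant [MeasurableSpace X] [MeasurableSpace Y]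
    (c : X → Y → ℝ) (ε : ℝ) (μ : Measure X) (ν : Measure Y)
    (π : Measure (X × Y)) : Prop :=
  IsCoupling μ ν π ∧
  ∃ D : X × Y → ℝ, Measurable D ∧ (∀ z, 0 < D z) ∧
    π = (μ.prod ν).withDensity (fun z => ENNReal.ofReal (D z)) ∧
    ∀ (k : ℕ) (x : Fin (k + 1) → X) (y : Fin (k + 1) → Y),
      (∏ i, D (x i, y i)) =
        Real.exp (-(1 / ε) * ((∑ i, c (x i) (y i)) - ∑ i, c (x i) (y (i + 1)))) *
        ∏ i, D (x i, y (i + 1))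

/-- Topological support of a measure. -/
def mSupport {Z : Type*} [TopologicalSpace Z] [MeasurableSpace Z] (π : Measure Z) : Set Z :=
  {z | ∀ U : Set Z, IsOpen U → z ∈ U → 0 < π U}

/-- Weak convergence `π ε → π₀` as `ε → 0⁺`, tested against bounded continuous functions. -/
def TendstoWeakly {Z : Type*} [TopologicalSpace Z] [MeasurableSpace Z]
    (π : ℝ → Measure Z) (π₀ : Measure Z) : Prop :=
  ∀ f : BoundedContinuousFunction Z ℝ,
    Tendsto (fun ε => ∫ z, f z ∂(π ε)) (𝓝[>] (0 : ℝ)) (𝓝 (∫ z, f z ∂π₀))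

/-- `c`-cyclical monotonicity of a set `Γ ⊆ X × Y`. -/
def CCyclMonotone (c : X → Y → ℝ) (Γ : Set (X × Y)) : Prop :=
  ∀ (k : ℕ) (p : Fin (k + 1) → X × Y), (∀ i, p i ∈ Γ) →
    (∑ i, c (p i).1 (p i).2) ≤ ∑ i, c (p i).1 (p (i + 1)).2

/-- The rate function `I(x,y)`: supremum over `k ≥ 2`, points `(x_i,y_i)_{i=2}^k ⊆ Γ`
(the first point being `z`) and permutations `σ` of the cost difference. -/
def rateI (c : X → Y → ℝ) (Γ : Set (X × Y)) (z : X × Y) : EReal :=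
  ⨆ (k : ℕ) (p : Fin (k + 2) → X × Y) (_ : p 0 = z) (_ : ∀ i, i ≠ 0 → p i ∈ Γ)
    (σ : Equiv.Perm (Fin (k + 2))),
    (((∑ i, c (p i).1 (p i).2) - ∑ i, c (p i).1 (p (σ i)).2 : ℝ) : EReal)

/-- The variant of the rate function using only the cyclic shift. -/
def rateICyc (c : X → Y → ℝ) (Γ : Set (X × Y)) (z : X × Y) : EReal :=
  ⨆ (k : ℕ) (p : Fin (k + 2) → X × Y) (_ : p 0 = z) (_ : ∀ i, i ≠ 0 → p i ∈ Γ),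
    (((∑ i, c (p i).1 (p i).2) - ∑ i, c (p i).1 (p (i + 1)).2 : ℝ) : EReal)

open scoped Classical in
/-- Relative entropy (Kullback–Leibler divergence) `H(π|R)`, valued in `EReal`. -/
def relEntropy {Z : Type*} [MeasurableSpace Z] (π R : Measure Z) : EReal :=
  if π ≪ R ∧ Integrable (fun z => Real.log (π.rnDeriv R z).toReal) π
  then ((∫ z, Real.log (π.rnDeriv R z).toReal ∂π : ℝ) : EReal)
  else ⊤

/-- Transport cost `∫ c dπ` (as a lower integral). -/
def transportCost [MeasurableSpace X] [MeasurableSpace Y]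
    (c : X → Y → ℝ) (π : Measure (X × Y)) : ℝ≥0∞ :=
  ∫⁻ z, ENNReal.ofReal (c z.1 z.2) ∂π

/-- Entropic optimal transport objective `∫ c dπ + ε H(π|μ⊗ν)`. -/
def eotObj [MeasurableSpace X] [MeasurableSpace Y]
    (c : X → Y → ℝ) (ε : ℝ) (μ : Measure X) (ν : Measure Y) (π : Measure (X × Y)) : EReal :=
  (transportCost c π : EReal) + (ε : EReal) * relEntropy π (μ.prod ν)

/-- The `c`-conjugate `ψ^c(y) = inf_x [ψ(x) + c(x,y)]`. -/
def cConj (c : X → Y → ℝ) (ψ : X → EReal) (y : Y) : EReal :=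
  ⨅ x, ψ x + (c x y : EReal)

/-- A proper `c`-convex function `ψ(x) = sup_y [ζ(y) − c(x,y)]`. -/
def IsCConvex (c : X → Y → ℝ) (ψ : X → EReal) : Prop :=
  (∀ x, ψ x ≠ ⊥) ∧ (∃ x, ψ x ≠ ⊤) ∧
  ∃ ζ : Y → EReal, ∀ x, ψ x = ⨆ y, ζ y - (c x y : EReal)

/-- The `c`-subdifferential `∂_c ψ = {(x,y) : ψ^c(y) − ψ(x) = c(x,y)}`. -/
def cSubdiff (c : X → Y → ℝ) (ψ : X → EReal) : Set (X × Y) :=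
  {p | cConj c ψ p.2 - ψ p.1 = (c p.1 p.2 : EReal)}

/-- A Kantorovich potential for `Γ`: a `c`-convex `ψ` with `Γ ⊆ ∂_c ψ`. -/
def IsKantorovichPotential (c : X → Y → ℝ) (Γ : Set (X × Y)) (ψ : X → EReal) : Prop :=
  IsCConvex c ψ ∧ Γ ⊆ cSubdiff c ψ

/-- Uniqueness of Kantorovich potentials on a set `Λ ⊆ X`. -/
def UniquenessOfPotentials (c : X → Y → ℝ) (Γ : Set (X × Y)) (Λ : Set X) : Prop :=
  ∀ ψ₁ ψ₂ : X → EReal, IsKantorovichPotential c Γ ψ₁ → IsKantorovichPotential c Γ ψ₂ →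
    ∀ x ∈ Λ, ∀ x' ∈ Λ, ψ₁ x - ψ₂ x = ψ₁ x' - ψ₂ x'

/-- The Rockafellar antiderivative `ψ_{(x₀,y₀)}` of `Γ`. -/
def rockafellar (c : X → Y → ℝ) (Γ : Set (X × Y)) (z₀ : X × Y) (x : X) : EReal :=
  ⨆ (k : ℕ) (p : Fin (k + 1) → X × Y) (_ : ∀ i, p i ∈ Γ),
    ((c z₀.1 z₀.2 - c (p 0).1 z₀.2 +
        ∑ i : Fin (k + 1),
          (c (p i).1 (p i).2 -
            c (if h : (i : ℕ) + 1 < k + 1 then (p ⟨(i : ℕ) + 1, h⟩).1 else x) (p i).2) : ℝ) : EReal)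

section Statement

variable {X Y : Type*} [TopologicalSpace X] [TopologicalSpace Y]

/-!
The decrease in cost when the second coordinates of a family of points are permuted by `σ` splits
as a sum over the cycles of `σ`, and on each cycle `σ` acts as a cyclic shift. Cycles inside `Γ`
contribute at most `0` by cyclical monotonicity, so only the cycle of the point `z` matters; if that
cycle is trivial it contributes `0`, and otherwise it is one of the competitors of the cyclic
supremum. Hence `I = max 0 I_cyc`, which reduces the claims on `I` to the sign of `I_cyc`.
Semicontinuity holds because `I` is a supremum of continuous functions.
-/

theorem exists_fin_equiv_sameCycle {ι : Type*} [Finite ι] (σ : Equiv.Perm ι) (x : ι) :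
    ∃ (m : ℕ) (e : Fin (m + 1) ≃ {i // σ.SameCycle x i}),
      (e 0 : ι) = x ∧ ∀ j, (e (j + 1) : ι) = σ (e j) := by
  obtain ⟨m, hm⟩ := Nat.exists_eq_add_one.2
    (Function.minimalPeriod_pos_of_mem_periodicPts (σ.injective.mem_periodicPts x))
  have iterate_mod (n : ℕ) : σ^[n % (m + 1)] x = σ^[n] x := by
    rw [← hm, Function.iterate_mod_minimalPeriod_eq]
  let orbit (j : Fin (m + 1)) : {i // σ.SameCycle x i} :=
    ⟨σ^[j] x, j, by rw [zpow_natCast, Equiv.Perm.coe_pow]⟩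
  have orbit_injective : orbit.Injective := fun j l hjl ↦
    Fin.ext <| Function.iterate_injOn_Iio_minimalPeriod (f := σ) (x := x)
      (j.isLt.trans_eq hm.symm) (l.isLt.trans_eq hm.symm) (congrArg Subtype.val hjl)
  have orbit_surjective : orbit.Surjective := by
    rintro ⟨i, hi⟩
    obtain ⟨n, rfl⟩ := hi.exists_nat_pow_eq
    exact ⟨Fin.ofNat (m + 1) n, Subtype.ext (iterate_mod n)⟩
  refine ⟨m, .ofBijective orbit ⟨orbit_injective, orbit_surjective⟩, rfl, fun j ↦ ?_⟩
  calc σ^[(j + 1 : Fin (m + 1))] x = σ^[j + 1] x := by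
        rw [Fin.val_add, Fin.val_one', Nat.add_mod_mod, iterate_mod]
    _ = σ (σ^[j] x) := Function.iterate_succ_apply' _ _ _

section RateFunction

variable {X Y ι κ : Type*} [Fintype ι] [Fintype κ] {c : X → Y → ℝ} {Γ : Set (X × Y)} {z : X × Y}

/-- The decrease in total cost when, in a finite family of pairs `p i = (x i, y i)`, each `x i` is
matched with `y (τ i)` instead of `y i`. Both suprema `rateI` and `rateICyc` are taken over such
decreases, and `τ` is a mere function so that cyclic shifts need no bundling. -/
def costGain (c : X → Y → ℝ) (p : ι → X × Y) (τ : ι → ι) : ℝ :=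
  (∑ i, c (p i).1 (p i).2) - ∑ i, c (p i).1 (p (τ i)).2

theorem costGain_id (c : X → Y → ℝ) (p : ι → X × Y) : costGain c p id = 0 :=
  sub_self _

theorem costGain_comp_equiv (c : X → Y → ℝ) (p : ι → X × Y) (e : κ ≃ ι) {τ : κ → κ} {τ' : ι → ι}
    (h : ∀ j, e (τ j) = τ' (e j)) : costGain c (p ∘ e) τ = costGain c p τ' := by
  simp only [costGain, Function.comp_apply, h,
    e.sum_comp fun i ↦ c (p i).1 (p i).2, e.sum_comp fun i ↦ c (p i).1 (p (τ' i)).2]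

theorem costGain_eq_add_subtypePerm (c : X → Y → ℝ) (p : ι → X × Y) (σ : Equiv.Perm ι)
    {P : ι → Prop} [DecidablePred P] (hP : ∀ i, P (σ i) ↔ P i) :
    costGain c p σ =
      costGain c (fun i : {i // P i} ↦ p i) (σ.subtypePerm hP) +
        costGain c (fun i : {i // ¬P i} ↦ p i) (σ.subtypePerm fun i ↦ not_congr (hP i)) := by
  simp only [costGain, Equiv.Perm.subtypePerm_apply,
    ← Fintype.sum_subtype_add_sum_subtype P fun i ↦ c (p i).1 (p i).2,
    ← Fintype.sum_subtype_add_sum_subtype P fun i ↦ c (p i).1 (p (σ i)).2]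
  ring

theorem exists_costGain_eq_cycle_add [DecidableEq ι] (c : X → Y → ℝ) (p : ι → X × Y)
    (σ : Equiv.Perm ι) (x : ι) :
    ∃ (m : ℕ) (e : Fin (m + 1) → ι), e.Injective ∧ e 0 = x ∧
      costGain c p σ = costGain c (p ∘ e) (· + 1) +
        costGain c (fun i : {i // ¬σ.SameCycle x i} ↦ p i)
          (σ.subtypePerm fun _ ↦ not_congr Equiv.Perm.sameCycle_apply_right) := by
  obtain ⟨m, e, he0, he⟩ := exists_fin_equiv_sameCycle σ x
  refine ⟨m, fun j ↦ e j, Subtype.val_injective.comp e.injective, he0, ?_⟩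
  rw [costGain_eq_add_subtypePerm c p σ fun _ ↦ Equiv.Perm.sameCycle_apply_right (x := x),
    ← costGain_comp_equiv c _ e fun j ↦ Subtype.ext (he j)]
  rfl

theorem CCyclMonotone.costGain_add_one_nonpos (hΓ : CCyclMonotone c Γ) {m : ℕ}
    {p : Fin (m + 1) → X × Y} (hp : ∀ i, p i ∈ Γ) : costGain c p (· + 1) ≤ 0 :=
  sub_nonpos.2 (hΓ m p hp)

theorem CCyclMonotone.costGain_perm_nonpos (hΓ : CCyclMonotone c Γ) {p : ι → X × Y}
    (hp : ∀ i, p i ∈ Γ) (σ : Equiv.Perm ι) : costGain c p σ ≤ 0 := by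
  classical
  induction hn : Fintype.card ι using Nat.strong_induction_on generalizing ι with
  | _ n ih =>
    rcases isEmpty_or_nonempty ι with _ | ⟨⟨x⟩⟩
    · simp [costGain]
    obtain ⟨m, e, -, -, hsplit⟩ := exists_costGain_eq_cycle_add c p σ x
    have card_lt : Fintype.card {i // ¬σ.SameCycle x i} < n :=
      hn ▸ Fintype.card_subtype_lt (not_not_intro (Equiv.Perm.SameCycle.refl σ x))
    rw [hsplit]
    exact add_nonpos (hΓ.costGain_add_one_nonpos fun j ↦ hp (e j))
      (ih _ card_lt (ι := {i // ¬σ.SameCycle x i}) (fun i ↦ hp i) _ rfl)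

theorem rateI_le_iff {a : EReal} :
    rateI c Γ z ≤ a ↔ ∀ (k : ℕ) (p : Fin (k + 2) → X × Y), p 0 = z → (∀ i, i ≠ 0 → p i ∈ Γ) →
      ∀ σ : Equiv.Perm (Fin (k + 2)), (costGain c p σ : EReal) ≤ a := by
  simp only [rateI, iSup_le_iff, costGain]

theorem rateICyc_le_iff {a : EReal} :
    rateICyc c Γ z ≤ a ↔ ∀ (k : ℕ) (p : Fin (k + 2) → X × Y), p 0 = z →
      (∀ i, i ≠ 0 → p i ∈ Γ) → (costGain c p (· + 1) : EReal) ≤ a := by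
  simp only [rateICyc, iSup_le_iff, costGain]

theorem costGain_le_rateI {k : ℕ} {p : Fin (k + 2) → X × Y} (hp : ∀ i, i ≠ 0 → p i ∈ Γ)
    (σ : Equiv.Perm (Fin (k + 2))) : (costGain c p σ : EReal) ≤ rateI c Γ (p 0) :=
  rateI_le_iff.1 le_rfl k p rfl hp σ

theorem costGain_le_rateICyc {k : ℕ} {p : Fin (k + 2) → X × Y} (hp : ∀ i, i ≠ 0 → p i ∈ Γ) :
    (costGain c p (· + 1) : EReal) ≤ rateICyc c Γ (p 0) :=
  rateICyc_le_iff.1 le_rfl k p rfl hp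

theorem rateI_nonneg (hΓ : Γ.Nonempty) (z : X × Y) : 0 ≤ rateI c Γ z := by
  obtain ⟨w, hw⟩ := hΓ
  have hp : ∀ i : Fin 2, i ≠ 0 → ![z, w] i ∈ Γ := by simp [Fin.forall_fin_two, hw]
  simpa [costGain_id] using costGain_le_rateI (c := c) hp (Equiv.refl _)

theorem rateICyc_le_rateI (c : X → Y → ℝ) (Γ : Set (X × Y)) (z : X × Y) :
    rateICyc c Γ z ≤ rateI c Γ z :=
  rateICyc_le_iff.2 fun _ _ h0 hp ↦ h0 ▸ costGain_le_rateI hp (Equiv.addRight 1)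

theorem CCyclMonotone.rateI_le_max (hΓ : CCyclMonotone c Γ) (z : X × Y) :
    rateI c Γ z ≤ max 0 (rateICyc c Γ z) := by
  refine rateI_le_iff.2 fun k p h0 hp σ ↦ ?_
  obtain ⟨m, e, he, he0, hsplit⟩ := exists_costGain_eq_cycle_add c p σ 0
  have off_cycle_nonpos : costGain c (fun i : {i // ¬σ.SameCycle 0 i} ↦ p i)
      (σ.subtypePerm fun _ ↦ not_congr Equiv.Perm.sameCycle_apply_right) ≤ 0 :=
    hΓ.costGain_perm_nonpos (fun i ↦ hp _ fun hi ↦ i.2 (hi.symm.sameCycle σ)) _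
  have cycle_le : (costGain c (p ∘ e) (· + 1) : EReal) ≤ max 0 (rateICyc c Γ z) := by
    match m with
    | 0 => exact le_max_of_le_left (by simp [costGain])
    | m + 1 =>
      have he_mem : ∀ j, j ≠ 0 → (p ∘ e) j ∈ Γ := fun j hj ↦ hp _ (he0 ▸ he.ne hj)
      have hz : (p ∘ e) 0 = z := by rw [Function.comp_apply, he0, h0]
      exact le_max_of_le_right (hz ▸ costGain_le_rateICyc he_mem)
  calc (costGain c p σ : EReal) ≤ costGain c (p ∘ e) (· + 1) := by
        rw [hsplit]
        exact_mod_cast add_le_of_nonpos_right off_cycle_nonpos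
    _ ≤ max 0 (rateICyc c Γ z) := cycle_le

theorem CCyclMonotone.rateI_eq_max (hΓ : CCyclMonotone c Γ) (hne : Γ.Nonempty) (z : X × Y) :
    rateI c Γ z = max 0 (rateICyc c Γ z) :=
  le_antisymm (hΓ.rateI_le_max z) (max_le (rateI_nonneg hne z) (rateICyc_le_rateI c Γ z))

theorem CCyclMonotone.rateICyc_nonpos (hΓ : CCyclMonotone c Γ) (hz : z ∈ Γ) :
    rateICyc c Γ z ≤ 0 := by
  refine rateICyc_le_iff.2 fun k p h0 hp ↦ ?_
  have hp' : ∀ i, p i ∈ Γ := fun i ↦ by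
    rcases eq_or_ne i 0 with rfl | hi
    exacts [h0 ▸ hz, hp i hi]
  exact_mod_cast hΓ.costGain_add_one_nonpos hp'

-- Swapping `z` with a point of `Γ` sharing one of its coordinates does not change the cost.
theorem rateICyc_nonneg (c : X → Y → ℝ) (hz : z.1 ∈ Prod.fst '' Γ ∨ z.2 ∈ Prod.snd '' Γ) :
    0 ≤ rateICyc c Γ z := by
  obtain ⟨w, hw, hwz⟩ : ∃ w ∈ Γ, w.1 = z.1 ∨ w.2 = z.2 := by
    rcases hz with ⟨w, hw, h⟩ | ⟨w, hw, h⟩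
    exacts [⟨w, hw, .inl h⟩, ⟨w, hw, .inr h⟩]
  have hp : ∀ i : Fin 2, i ≠ 0 → ![z, w] i ∈ Γ := by simp [Fin.forall_fin_two, hw]
  have gain_eq_zero : costGain c ![z, w] (· + 1) = 0 := by
    rcases hwz with h | h <;> simp [costGain, Fin.sum_univ_two, h, add_comm]
  simpa [gain_eq_zero] using costGain_le_rateICyc (c := c) hp

section Semicontinuity

theorem rateI_eq_iSup_cons (c : X → Y → ℝ) (Γ : Set (X × Y)) (z : X × Y) :
    rateI c Γ z = ⨆ (k : ℕ) (q : Fin (k + 1) → X × Y) (_ : ∀ i, q i ∈ Γ)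
      (σ : Equiv.Perm (Fin (k + 2))),
        (costGain c (Fin.cons z q : Fin (k + 2) → X × Y) σ : EReal) := by
  refine eq_of_forall_ge_iff fun a ↦ ?_
  simp only [rateI_le_iff, iSup_le_iff]
  refine ⟨fun h k q hq σ ↦ h k _ rfl (Fin.cases (absurd rfl) fun i _ ↦ hq i) σ,
    fun h k p h0 hp σ ↦ ?_⟩
  simpa only [← h0, Fin.cons_self_tail] using
    h k (Fin.tail p) (fun i ↦ hp _ (Fin.succ_ne_zero i)) σ

variable [TopologicalSpace X] [TopologicalSpace Y]

theorem continuous_costGain (hc : Continuous fun p : X × Y ↦ c p.1 p.2) (τ : ι → ι) :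
    Continuous fun p : ι → X × Y ↦ costGain c p τ := by
  unfold costGain
  fun_prop

theorem lowerSemicontinuous_rateI (hc : Continuous fun p : X × Y ↦ c p.1 p.2)
    (Γ : Set (X × Y)) : LowerSemicontinuous (rateI c Γ) := by
  rw [funext (rateI_eq_iSup_cons c Γ)]
  refine lowerSemicontinuous_iSup fun k ↦ lowerSemicontinuous_iSup fun q ↦
    lowerSemicontinuous_iSup fun _ ↦ lowerSemicontinuous_iSup fun σ ↦ ?_
  have continuous_cons : Continuous fun z ↦ (Fin.cons z q : Fin (k + 2) → X × Y) :=
    Continuous.finCons (A := fun _ ↦ X × Y) continuous_id continuous_const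
  exact (continuous_coe_real_ereal.comp
    ((continuous_costGain hc σ).comp continuous_cons)).lowerSemicontinuous

end Semicontinuity

end RateFunction

theorem stmt5_general (c : X → Y → ℝ) (hc : Continuous fun p : X × Y => c p.1 p.2)
    (Γ : Set (X × Y)) (hΓne : Γ.Nonempty) (hΓ : CCyclMonotone c Γ) :
    (∀ z, 0 ≤ rateI c Γ z) ∧
    LowerSemicontinuous (rateI c Γ) ∧
    (∀ z ∈ Γ, rateI c Γ z = 0) ∧
    (∀ z, rateICyc c Γ z ≤ rateI c Γ z) ∧
    (∀ z : X × Y, z.1 ∈ Prod.fst '' Γ ∨ z.2 ∈ Prod.snd '' Γ →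
      rateI c Γ z = rateICyc c Γ z) := by
  refine ⟨rateI_nonneg hΓne, lowerSemicontinuous_rateI hc Γ, fun z hz ↦ ?_,
    rateICyc_le_rateI c Γ, fun z hz ↦ ?_⟩
  · rw [hΓ.rateI_eq_max hΓne, max_eq_left (hΓ.rateICyc_nonpos hz)]
  · rw [hΓ.rateI_eq_max hΓne, max_eq_right (rateICyc_nonneg c hz)]

/-- basic properties of the rate function `I`. -/
theorem stmt5 (c : X → Y → ℝ) (hc : Continuous fun p : X × Y => c p.1 p.2)
    (hc0 : ∀ x y, 0 ≤ c x y)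
    (Γ : Set (X × Y)) (hΓne : Γ.Nonempty) (hΓ : CCyclMonotone c Γ) :
    (∀ z, 0 ≤ rateI c Γ z) ∧
    LowerSemicontinuous (rateI c Γ) ∧
    (∀ z ∈ Γ, rateI c Γ z = 0) ∧
    (∀ z, rateICyc c Γ z ≤ rateI c Γ z) ∧
    (∀ z : X × Y, z.1 ∈ Prod.fst '' Γ ∨ z.2 ∈ Prod.snd '' Γ →
      rateI c Γ z = rateICyc c Γ z) :=
  stmt5_general c hc Γ hΓne hΓ

end Statement

end EOT
end
end

section
/- (Large deviations upper bound.) For every compact set C ⊂ X×Y, limsup_{ε→0} ε log π_ε(C) ≤ −inf_{(x,y)∈C} I(x,y). -/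
open MeasureTheory Filter Topology Set
open scoped ENNReal

noncomputable section

namespace EOT

variable {X Y : Type*}

/-!
A two-point exchange shows that the density of `π_ε` is `exp (-c / ε)` times a function of `x` times
a function of `y`. On a box `A × B` on which `c` is nearly constant, `π_ε (A × B)` is therefore
nearly `exp (-c / ε) μ' A ν' B`, and in a product of such masses permuting the sides `B` changes
only the exponential. For boxes around `(x, y)` and points of `spt π_*`, this bounds the product of
the masses by `exp (-a / ε)` for any `a < I (x, y)`. By the portmanteau theorem the boxes around
points of the support keep a mass bounded below, so the bound passes to the box around `(x, y)`.
A compact set is covered by finitely many such boxes.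
-/

section Density

variable [MeasurableSpace X] [MeasurableSpace Y]

theorem exists_measurable_eq_exp_mul_mul [Nonempty (X × Y)] {c : X → Y → ℝ}
    (hc : Measurable fun p : X × Y => c p.1 p.2) {ε : ℝ} {D : X × Y → ℝ}
    (hDm : Measurable D) (hDpos : ∀ z, 0 < D z)
    (hD : ∀ x x' y y', D (x, y) * D (x', y') =
      Real.exp (-(1 / ε) * (c x y + c x' y' - (c x y' + c x' y))) * (D (x, y') * D (x', y))) :
    ∃ (f : X → ℝ) (g : Y → ℝ), Measurable f ∧ Measurable g ∧ (∀ x, 0 ≤ f x) ∧ (∀ y, 0 ≤ g y) ∧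
      ∀ x y, D (x, y) = f x * g y * Real.exp (-c x y / ε) := by
  obtain ⟨x₀, y₀⟩ := ‹Nonempty (X × Y)›
  set E : X × Y → ℝ := fun z => D z * Real.exp (c z.1 z.2 / ε) with hE
  have hEm : Measurable E := by fun_prop
  have hEpos (z : X × Y) : 0 < E z := mul_pos (hDpos z) (Real.exp_pos _)
  have hED (x : X) (y : Y) : D (x, y) = E (x, y) * Real.exp (-c x y / ε) := by
    rw [hE, mul_assoc, ← Real.exp_add, neg_div, add_neg_cancel, Real.exp_zero, mul_one]
  have E_exchange (x : X) (y : Y) : E (x, y) * E (x₀, y₀) = E (x, y₀) * E (x₀, y) := by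
    have exp_exchange : Real.exp (-(1 / ε) * (c x y + c x₀ y₀ - (c x y₀ + c x₀ y))) *
        (Real.exp (c x y / ε) * Real.exp (c x₀ y₀ / ε)) =
        Real.exp (c x y₀ / ε) * Real.exp (c x₀ y / ε) := by
      simp only [← Real.exp_add]
      ring_nf
    calc E (x, y) * E (x₀, y₀)
        = D (x, y) * D (x₀, y₀) * (Real.exp (c x y / ε) * Real.exp (c x₀ y₀ / ε)) := by
          simp only [hE]; ring
      _ = D (x, y₀) * D (x₀, y) * (Real.exp (c x y₀ / ε) * Real.exp (c x₀ y / ε)) := by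
          rw [hD, ← exp_exchange]; ring
      _ = E (x, y₀) * E (x₀, y) := by simp only [hE]; ring
  refine ⟨fun x => E (x, y₀), fun y => E (x₀, y) / E (x₀, y₀), by fun_prop, by fun_prop,
    fun x => (hEpos _).le, fun y => (div_pos (hEpos _) (hEpos _)).le, fun x y => ?_⟩
  rw [hED, ← mul_div_assoc, ← E_exchange, mul_div_cancel_right₀ _ (hEpos _).ne']

theorem IsCyclInvariant.exists_eq_withDensity_exp {c : X → Y → ℝ} {ε : ℝ} {μ : Measure X}
    {ν : Measure Y} {π : Measure (X × Y)} (hπ : IsCyclInvariant c ε μ ν π)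
    (hc : Measurable fun p : X × Y => c p.1 p.2) :
    ∃ (μ' : Measure X) (ν' : Measure Y), SFinite μ' ∧ SFinite ν' ∧
      π = (μ'.prod ν').withDensity fun z => ENNReal.ofReal (Real.exp (-c z.1 z.2 / ε)) := by
  obtain ⟨⟨_, hμ, hν⟩, D, hDm, hDpos, hπD, hcycl⟩ := hπ
  have : Nonempty (X × Y) := nonempty_of_isProbabilityMeasure π
  have : SFinite μ := hμ ▸ inferInstance
  have : SFinite ν := hν ▸ inferInstance
  obtain ⟨f, g, hf, hg, hf0, hg0, hfg⟩ := exists_measurable_eq_exp_mul_mul hc hDm hDpos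
    fun x x' y y' => by simpa [Fin.prod_univ_two, Fin.sum_univ_two] using hcycl 1 ![x, x'] ![y, y']
  refine ⟨μ.withDensity fun x => ENNReal.ofReal (f x), ν.withDensity fun y => ENNReal.ofReal (g y),
    inferInstance, inferInstance, ?_⟩
  rw [hπD, prod_withDensity (by fun_prop) (by fun_prop),
    ← withDensity_mul _ (by fun_prop) (by fun_prop)]
  congr with z
  rw [Pi.mul_apply, ← ENNReal.ofReal_mul (hf0 _),
    ← ENNReal.ofReal_mul (mul_nonneg (hf0 _) (hg0 _)), ← hfg]

theorem withDensity_le_mul_of_forall_le {Z : Type*} [MeasurableSpace Z] (ρ : Measure Z)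
    {w : Z → ℝ≥0∞} {S : Set Z} (hS : MeasurableSet S) {b : ℝ≥0∞} (hw : ∀ z ∈ S, w z ≤ b) :
    ρ.withDensity w S ≤ b * ρ S := by
  rw [withDensity_apply _ hS, ← setLIntegral_const]
  exact setLIntegral_mono' hS hw

theorem mul_le_withDensity_of_forall_le {Z : Type*} [MeasurableSpace Z] (ρ : Measure Z)
    {w : Z → ℝ≥0∞} {S : Set Z} (hS : MeasurableSet S) {b : ℝ≥0∞} (hw : ∀ z ∈ S, b ≤ w z) :
    b * ρ S ≤ ρ.withDensity w S := by
  rw [withDensity_apply _ hS, ← setLIntegral_const]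
  exact setLIntegral_mono' hS hw

theorem prod_mul_prod_withDensity_box_le {ι : Type*} [Fintype ι] (μ : Measure X) (ν : Measure Y)
    [SFinite ν] {w : X × Y → ℝ≥0∞} (σ : Equiv.Perm ι) {A : ι → Set X} {B : ι → Set Y}
    (hA : ∀ i, MeasurableSet (A i)) (hB : ∀ i, MeasurableSet (B i)) {L U : ι → ℝ≥0∞}
    (hU : ∀ i, ∀ z ∈ A i ×ˢ B i, w z ≤ U i) (hL : ∀ i, ∀ z ∈ A i ×ˢ B (σ i), L i ≤ w z) :
    (∏ i, L i) * ∏ i, (μ.prod ν).withDensity w (A i ×ˢ B i) ≤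
      (∏ i, U i) * ∏ i, (μ.prod ν).withDensity w (A i ×ˢ B (σ i)) := by
  have prod_box (τ : Equiv.Perm ι) :
      ∏ i, (μ.prod ν) (A i ×ˢ B (τ i)) = (∏ i, μ (A i)) * ∏ i, ν (B i) := by
    simp only [Measure.prod_prod, Finset.prod_mul_distrib]
    rw [Equiv.prod_comp τ fun i => ν (B i)]
  calc (∏ i, L i) * ∏ i, (μ.prod ν).withDensity w (A i ×ˢ B i)
      ≤ (∏ i, L i) * ∏ i, U i * (μ.prod ν) (A i ×ˢ B i) := by
        gcongr with i
        exact withDensity_le_mul_of_forall_le _ ((hA i).prod (hB i)) (hU i)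
    _ = (∏ i, U i) * ∏ i, L i * (μ.prod ν) (A i ×ˢ B (σ i)) := by
        rw [Finset.prod_mul_distrib, Finset.prod_mul_distrib, prod_box σ,
          ← prod_box (Equiv.refl ι), mul_left_comm]
        rfl
    _ ≤ (∏ i, U i) * ∏ i, (μ.prod ν).withDensity w (A i ×ˢ B (σ i)) := by
        gcongr with i
        exact mul_le_withDensity_of_forall_le _ ((hA i).prod (hB (σ i))) (hL i)

theorem IsCyclInvariant.prod_measureReal_box_le {c : X → Y → ℝ} {ε : ℝ} {μ : Measure X}
    {ν : Measure Y} {π : Measure (X × Y)} (hπ : IsCyclInvariant c ε μ ν π)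
    (hc : Measurable fun p : X × Y => c p.1 p.2) (hε : 0 ≤ ε) {ι : Type*} [Fintype ι]
    (σ : Equiv.Perm ι) {A : ι → Set X} {B : ι → Set Y} (hA : ∀ i, MeasurableSet (A i))
    (hB : ∀ i, MeasurableSet (B i)) {l u : ι → ℝ}
    (hl : ∀ i, ∀ z ∈ A i ×ˢ B i, l i ≤ c z.1 z.2)
    (hu : ∀ i, ∀ z ∈ A i ×ˢ B (σ i), c z.1 z.2 ≤ u i) :
    ∏ i, π.real (A i ×ˢ B i) ≤ Real.exp (-(∑ i, l i - ∑ i, u i) / ε) := by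
  have : IsProbabilityMeasure π := hπ.1.1
  obtain ⟨μ', ν', _, _, hπ'⟩ := hπ.exists_eq_withDensity_exp hc
  have box_le : (∏ i, ENNReal.ofReal (Real.exp (-u i / ε))) * ∏ i, π (A i ×ˢ B i) ≤
      ∏ i, ENNReal.ofReal (Real.exp (-l i / ε)) := by
    have h := prod_mul_prod_withDensity_box_le μ' ν' σ hA hB
      (w := fun z => ENNReal.ofReal (Real.exp (-c z.1 z.2 / ε)))
      (U := fun i => ENNReal.ofReal (Real.exp (-l i / ε)))
      (L := fun i => ENNReal.ofReal (Real.exp (-u i / ε)))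
      (fun i z hz => by gcongr; exact hl i z hz) (fun i z hz => by gcongr; exact hu i z hz)
    rw [← hπ'] at h
    exact h.trans (mul_le_of_le_one_right' (Finset.prod_le_one' fun i _ => prob_le_one))
  have box_le_real : Real.exp (∑ i, -u i / ε) * ∏ i, π.real (A i ×ˢ B i) ≤
      Real.exp (∑ i, -l i / ε) := by
    have h := ENNReal.toReal_mono (ENNReal.prod_ne_top fun i _ => ENNReal.ofReal_ne_top) box_le
    simpa only [measureReal_def, ENNReal.toReal_mul, ENNReal.toReal_prod,
      ENNReal.toReal_ofReal (Real.exp_pos _).le, ← Real.exp_sum] using h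
  rw [← le_div_iff₀' (Real.exp_pos _), ← Real.exp_sub] at box_le_real
  refine box_le_real.trans_eq (congrArg Real.exp ?_)
  rw [← Finset.sum_div, ← Finset.sum_div, Finset.sum_neg_distrib, Finset.sum_neg_distrib]
  ring

end Density

theorem exists_isOpen_forall_dist_lt [TopologicalSpace X] [TopologicalSpace Y] {M : Type*}
    [PseudoMetricSpace M] {f : X × Y → M} (hf : Continuous f) {ι κ : Type*} [Finite ι] [Finite κ]
    (x : ι → X) (y : κ → Y) {δ : ℝ} (hδ : 0 < δ) :
    ∃ (A : ι → Set X) (B : κ → Set Y), (∀ i, IsOpen (A i)) ∧ (∀ j, IsOpen (B j)) ∧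
      (∀ i, x i ∈ A i) ∧ (∀ j, y j ∈ B j) ∧
      ∀ i j, ∀ z ∈ A i ×ˢ B j, dist (f z) (f (x i, y j)) < δ := by
  have near (i : ι) (j : κ) : ∃ U V, IsOpen U ∧ x i ∈ U ∧ IsOpen V ∧ y j ∈ V ∧
      U ×ˢ V ⊆ {z | dist (f z) (f (x i, y j)) < δ} :=
    mem_nhds_prod_iff'.1 (hf.continuousAt.eventually (Metric.ball_mem_nhds _ hδ))
  choose U V hU hxU hV hyV hUV using near
  exact ⟨fun i => ⋂ j, U i j, fun j => ⋂ i, V i j,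
    fun i => isOpen_iInter_of_finite (hU i), fun j => isOpen_iInter_of_finite fun i => hV i j,
    fun i => mem_iInter.2 (hxU i), fun j => mem_iInter.2 fun i => hyV i j,
    fun i j _ hz => hUV i j ⟨mem_iInter.1 hz.1 j, mem_iInter.1 hz.2 i⟩⟩

theorem TendstoWeakly.one_isBigO_measureReal {Z : Type*} [TopologicalSpace Z]
    [HasOuterApproxClosed Z] [MeasurableSpace Z] [OpensMeasurableSpace Z] {π : ℝ → Measure Z}
    [∀ ε, IsProbabilityMeasure (π ε)] {πs : Measure Z} [IsProbabilityMeasure πs]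
    (hπ : TendstoWeakly π πs) {U : Set Z} (hU : IsOpen U) (hpos : 0 < πs U) :
    (fun _ => (1 : ℝ)) =O[𝓝[>] 0] fun ε => (π ε).real U := by
  let P (ε : ℝ) : ProbabilityMeasure Z := ⟨π ε, inferInstance⟩
  let Ps : ProbabilityMeasure Z := ⟨πs, inferInstance⟩
  have tendsto_prob : Tendsto P (𝓝[>] 0) (𝓝 Ps) :=
    ProbabilityMeasure.tendsto_iff_forall_integral_tendsto.2 hπ
  have measure_le_liminf : πs U ≤ liminf (fun ε => π ε U) (𝓝[>] 0) :=
    ProbabilityMeasure.le_liminf_measure_open_of_tendsto tendsto_prob hU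
  obtain ⟨m, hm, hm_lt⟩ := exists_between (hpos.trans_le measure_le_liminf)
  refine (Asymptotics.isBigO_const_left_iff_pos_le_norm one_ne_zero).2
    ⟨m.toReal, ENNReal.toReal_pos hm.ne' hm_lt.ne_top, ?_⟩
  filter_upwards [eventually_lt_of_lt_liminf hm_lt] with ε hε
  rw [Real.norm_of_nonneg measureReal_nonneg]
  exact ENNReal.toReal_mono (measure_ne_top _ _) hε.le

theorem limsup_mul_log_le_of_isBigO_exp {u : ℝ → ℝ≥0∞} (hu_top : ∀ ε, u ε ≠ ∞) {b : ℝ}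
    (hu : (fun ε => (u ε).toReal) =O[𝓝[>] 0] fun ε => Real.exp (b / ε)) :
    limsup (fun ε : ℝ => (ε : EReal) * ENNReal.log (u ε)) (𝓝[>] 0) ≤ b := by
  obtain ⟨K, hK, hKu⟩ := hu.exists_pos
  have log_le : ∀ᶠ ε : ℝ in 𝓝[>] 0,
      (ε : EReal) * ENNReal.log (u ε) ≤ ((ε * Real.log K + b : ℝ) : EReal) := by
    filter_upwards [hKu.bound, self_mem_nhdsWithin] with ε hε (hε_pos : 0 < ε)
    rw [Real.norm_of_nonneg (Real.exp_pos _).le] at hε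
    calc (ε : EReal) * ENNReal.log (u ε)
        ≤ ε * ENNReal.log (ENNReal.ofReal (K * Real.exp (b / ε))) := by
          gcongr
          exact (ENNReal.le_ofReal_iff_toReal_le (hu_top ε) (by positivity)).2
            ((le_abs_self _).trans hε)
      _ = ((ε * (Real.log K + b / ε) : ℝ) : EReal) := by
          rw [ENNReal.log_ofReal_of_pos (by positivity),
            Real.log_mul hK.ne' (Real.exp_pos _).ne', Real.log_exp, EReal.coe_mul]
      _ = ((ε * Real.log K + b : ℝ) : EReal) := by
          rw [mul_add, mul_div_cancel₀ _ hε_pos.ne']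
  have tendsto_b : Tendsto (fun ε : ℝ => ((ε * Real.log K + b : ℝ) : EReal)) (𝓝[>] 0) (𝓝 b) := by
    have h : Continuous fun ε : ℝ => ((ε * Real.log K + b : ℝ) : EReal) :=
      continuous_coe_real_ereal.comp (by fun_prop)
    simpa using (h.tendsto 0).mono_left nhdsWithin_le_nhds
  exact (limsup_le_limsup log_le).trans_eq tendsto_b.limsup_eq

theorem measureReal_isBigO_of_isCompact {Z : Type*} [TopologicalSpace Z] [MeasurableSpace Z]
    {ι : Type*} {π : ι → Measure Z} [∀ i, IsFiniteMeasure (π i)] {l : Filter ι} {h : ι → ℝ}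
    {C : Set Z} (hC : IsCompact C)
    (hloc : ∀ z ∈ C, ∃ U ∈ 𝓝 z, (fun i => (π i).real U) =O[l] h) :
    (fun i => (π i).real C) =O[l] h := by
  refine hC.induction_on (p := fun S => (fun i => (π i).real S) =O[l] h) ?_ ?_ ?_ ?_
  · simpa only [measureReal_empty] using Asymptotics.isBigO_zero h l
  · exact fun S T hST hT => .trans (.of_norm_le fun i => by
      rw [Real.norm_of_nonneg measureReal_nonneg]; exact measureReal_mono hST) hT
  · exact fun S T hS hT => .trans (.of_norm_le fun i => by
      rw [Real.norm_of_nonneg measureReal_nonneg]; exact measureReal_union_le S T) (hS.add hT)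
  · intro z hz
    obtain ⟨U, hU, hUO⟩ := hloc z hz
    exact ⟨U, mem_nhdsWithin_of_mem_nhds hU, hUO⟩

section UpperBound

variable [TopologicalSpace X] [MeasurableSpace X] [OpensMeasurableSpace X]
  [TopologicalSpace Y] [MeasurableSpace Y] [OpensMeasurableSpace Y]
  [SecondCountableTopologyEither X Y] {μ : Measure X} {ν : Measure Y} {c : X → Y → ℝ}

theorem exists_isOpen_prod_measureReal_le (hc : Continuous fun p : X × Y => c p.1 p.2)
    {ι : Type*} [Fintype ι] (p : ι → X × Y) (σ : Equiv.Perm ι) {a : ℝ}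
    (ha : a < ∑ i, c (p i).1 (p i).2 - ∑ i, c (p i).1 (p (σ i)).2) :
    ∃ V : ι → Set (X × Y), (∀ i, IsOpen (V i)) ∧ (∀ i, p i ∈ V i) ∧
      ∀ (ε : ℝ) (π : Measure (X × Y)), 0 ≤ ε → IsCyclInvariant c ε μ ν π →
        ∏ i, π.real (V i) ≤ Real.exp (-a / ε) := by
  obtain ⟨δ, hδ, hδ_lt⟩ := exists_pos_mul_lt (sub_pos.2 ha) (2 * Fintype.card ι)
  obtain ⟨A, B, hA, hB, hpA, hpB, hAB⟩ :=
    exists_isOpen_forall_dist_lt hc (fun i => (p i).1) (fun i => (p i).2) hδ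
  refine ⟨fun i => A i ×ˢ B i, fun i => (hA i).prod (hB i), fun i => ⟨hpA i, hpB i⟩,
    fun ε π hε hπ => ?_⟩
  simp only [Real.dist_eq, abs_lt] at hAB
  refine (hπ.prod_measureReal_box_le hc.measurable hε σ (fun i => (hA i).measurableSet)
    (fun i => (hB i).measurableSet) (l := fun i => c (p i).1 (p i).2 - δ)
    (u := fun i => c (p i).1 (p (σ i)).2 + δ) (fun i z hz => by linarith [hAB i i z hz])
    (fun i z hz => by linarith [hAB i (σ i) z hz])).trans ?_
  gcongr
  simp only [Finset.sum_sub_distrib, Finset.sum_add_distrib, Finset.sum_const, Finset.card_univ,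
    nsmul_eq_mul]
  linarith

variable [TopologicalSpace.PseudoMetrizableSpace X] [TopologicalSpace.PseudoMetrizableSpace Y]
  {πε : ℝ → Measure (X × Y)} [∀ ε, IsProbabilityMeasure (πε ε)]
  {πs : Measure (X × Y)} [IsProbabilityMeasure πs]

theorem exists_nhds_measureReal_isBigO_exp (hc : Continuous fun p : X × Y => c p.1 p.2)
    (hπε : ∀ ε, 0 < ε → IsCyclInvariant c ε μ ν (πε ε)) (hconv : TendstoWeakly πε πs)
    {z : X × Y} {a : ℝ} (ha : a < rateI c (mSupport πs) z) :
    ∃ U ∈ 𝓝 z, (fun ε => (πε ε).real U) =O[𝓝[>] 0] fun ε => Real.exp (-a / ε) := by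
  simp only [rateI, lt_iSup_iff, EReal.coe_lt_coe_iff] at ha
  obtain ⟨k, p, rfl, hp, σ, ha⟩ := ha
  obtain ⟨V, hVo, hpV, hV⟩ := exists_isOpen_prod_measureReal_le (μ := μ) (ν := ν) hc p σ ha
  refine ⟨V 0, (hVo 0).mem_nhds (hpV 0), ?_⟩
  have one_isBigO : (fun _ => (1 : ℝ)) =O[𝓝[>] 0]
      fun ε => ∏ i : Fin (k + 1), (πε ε).real (V i.succ) := by
    simpa only [Finset.prod_const_one] using Asymptotics.IsBigO.finsetProd fun i _ =>
      hconv.one_isBigO_measureReal (hVo i.succ) (hp i.succ i.succ_ne_zero _ (hVo _) (hpV _))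
  have prod_isBigO : (fun ε => (πε ε).real (V 0) * ∏ i : Fin (k + 1), (πε ε).real (V i.succ))
      =O[𝓝[>] 0] fun ε => Real.exp (-a / ε) := by
    refine .of_bound' ?_
    filter_upwards [self_mem_nhdsWithin] with ε (hε : 0 < ε)
    rw [← Fin.prod_univ_succ fun i => (πε ε).real (V i), Real.norm_of_nonneg (by positivity),
      Real.norm_of_nonneg (Real.exp_pos _).le]
    exact hV ε (πε ε) hε.le (hπε ε hε)
  simpa only [mul_one] using ((Asymptotics.isBigO_refl _ _).mul one_isBigO).trans prod_isBigO

theorem stmt6_general (hc : Continuous fun p : X × Y => c p.1 p.2)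
    (hπε : ∀ ε, 0 < ε → IsCyclInvariant c ε μ ν (πε ε)) (hconv : TendstoWeakly πε πs)
    {C : Set (X × Y)} (hC : IsCompact C) :
    limsup (fun ε : ℝ => (ε : EReal) * ENNReal.log (πε ε C)) (𝓝[>] 0) ≤
      -⨅ z ∈ C, rateI c (mSupport πs) z := by
  refine EReal.le_neg_of_le_neg (EReal.ge_of_forall_gt_iff_ge.1 fun a ha => ?_)
  have hC_isBigO : (fun ε => (πε ε).real C) =O[𝓝[>] 0] fun ε => Real.exp (-a / ε) :=
    measureReal_isBigO_of_isCompact hC fun z hz =>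
      exists_nhds_measureReal_isBigO_exp hc hπε hconv (ha.trans_le (iInf₂_le z hz))
  exact EReal.le_neg_of_le_neg <| limsup_mul_log_le_of_isBigO_exp (u := fun ε => πε ε C)
    (fun ε => measure_ne_top (πε ε) C) hC_isBigO

end UpperBound

section Statement

variable {X Y : Type*}
  [MeasurableSpace X] [MetricSpace X] [PolishSpace X] [BorelSpace X]
  [MeasurableSpace Y] [MetricSpace Y] [PolishSpace Y] [BorelSpace Y]

/-- large deviations upper bound on compact sets. -/
theorem stmt6 (μ : Measure X) (ν : Measure Y)
    [IsProbabilityMeasure μ] [IsProbabilityMeasure ν]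
    (c : X → Y → ℝ) (hc : Continuous fun p : X × Y => c p.1 p.2) (hc0 : ∀ x y, 0 ≤ c x y)
    (πε : ℝ → Measure (X × Y)) [∀ ε, IsProbabilityMeasure (πε ε)]
    (hπε : ∀ ε, 0 < ε → IsCyclInvariant c ε μ ν (πε ε))
    (πs : Measure (X × Y)) (hπs : IsCoupling μ ν πs) (hconv : TendstoWeakly πε πs)
    (C : Set (X × Y)) (hC : IsCompact C) :
    limsup (fun (ε : ℝ) => (ε : EReal) * ENNReal.log (πε ε C)) (𝓝[>] (0 : ℝ)) ≤
      -⨅ z ∈ C, rateI c (mSupport πs) z := by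
  have := hπs.1
  exact stmt6_general hc hπε hconv hC

end Statement

end EOT
end
end

section
/- Suppose uniqueness of Kantorovich potentials holds on X_0 := proj_X Γ, i.e. for any c-convex functions ψ_1, ψ_2 on X with Γ ⊂ ∂_c ψ_i (i = 1,2), the difference ψ_1 − ψ_2 is constant on X_0. Then for any Kantorovich potential ψ (a c-convex function with Γ ⊂ ∂_c ψ), I(x,y) = c(x,y) − ψ^c(y) + ψ(x) for all (x,y) ∈ X_0 × Y_0 where Y_0 := proj_Y Γ; in particular I < ∞ on X_0 × Y_0. Moreover, if (x,y), (x',y') ∈ X_0 × Y_0 are such that (x',y) ∈ Γ and (x,y') ∈ Γ, then I(x,y) + I(x',y') = c(x,y) + c(x',y') − c(x,y') − c(x',y). -/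
open MeasureTheory Filter Topology Set
open scoped ENNReal

noncomputable section

namespace EOT

variable {X Y : Type*}

section Statement

variable {X Y : Type*} [TopologicalSpace X] [TopologicalSpace Y]

section RateFunction

/-!
Write `z = (x₀, y)` for a point of `Γ` over `y`, and `R` for the Rockafellar antiderivative of `Γ`
at `z`. For any potential `ψ`, the inequality `ψ^c(y) - ψ(x) ≤ c(x, y)`, with equality on `Γ`,
summed along a permutation gives `I(x, y) ≤ c(x, y) - ψ^c(y) + ψ(x)`. Conversely, closing a chain
from `z` to `x` up into a cycle through `(x, y)` gives `I(x, y) ≥ R(x) + c(x, y) - c(x₀, y)`.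
But `R` is itself a potential, with `R(x₀) = 0`, so uniqueness forces `R(x) = ψ(x) - ψ(x₀)`; since
`ψ^c(y) = ψ(x₀) + c(x₀, y)`, the two bounds agree.
-/

variable {X Y : Type*}

/-- A dual feasible pair of real potentials, on the projections of `Γ`, satisfying complementary
slackness on `Γ`. With `f = ψ` and `g = ψ^c`, this is what survives of a Kantorovich potential `ψ`
away from the points where it may be infinite. -/
structure IsTightDualPair (c : X → Y → ℝ) (Γ : Set (X × Y)) (f : X → ℝ) (g : Y → ℝ) : Prop where
  sub_le : ∀ x ∈ Prod.fst '' Γ, ∀ y ∈ Prod.snd '' Γ, g y - f x ≤ c x y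
  sub_eq : ∀ p ∈ Γ, g p.2 - f p.1 = c p.1 p.2

/-- The gain of the chain `z, p 0, …, p k, x`: the quantity whose supremum over chains in `Γ` is
the Rockafellar antiderivative. The link costs `c (p (i + 1)).1 (p i).2` form one sum over `Fin k`,
apart from the last link, so that no case distinction on `i` is needed. -/
def chainGain (c : X → Y → ℝ) (z : X × Y) {k : ℕ} (p : Fin (k + 1) → X × Y) (x : X) : ℝ :=
  c z.1 z.2 + ∑ i, c (p i).1 (p i).2 -
    (c (p 0).1 z.2 + ∑ i : Fin k, c (p i.succ).1 (p i.castSucc).2 + c x (p (Fin.last k)).2)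

variable {c : X → Y → ℝ} {Γ : Set (X × Y)} {ψ : X → EReal}

lemma IsTightDualPair.rateI_le {f : X → ℝ} {g : Y → ℝ} (h : IsTightDualPair c Γ f g)
    {x : X} (hx : x ∈ Prod.fst '' Γ) {y : Y} (hy : y ∈ Prod.snd '' Γ) :
    rateI c Γ (x, y) ≤ ((c x y - g y + f x : ℝ) : EReal) := by
  refine iSup_le fun k => iSup_le fun p => iSup_le fun hp0 => iSup_le fun hp => iSup_le fun σ => ?_
  rw [EReal.coe_le_coe_iff]
  have hfst (i) : (p i).1 ∈ Prod.fst '' Γ := by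
    rcases eq_or_ne i 0 with rfl | hi
    exacts [hp0 ▸ hx, mem_image_of_mem _ (hp i hi)]
  have hsnd (i) : (p i).2 ∈ Prod.snd '' Γ := by
    rcases eq_or_ne i 0 with rfl | hi
    exacts [hp0 ▸ hy, mem_image_of_mem _ (hp i hi)]
  have hdiag : ∑ i, c (p i).1 (p i).2 = c x y - g y + f x + ∑ i, (g (p i).2 - f (p i).1) := by
    have htail (i : Fin (k + 1)) := h.sub_eq _ (hp i.succ i.succ_ne_zero)
    simp only [Fin.sum_univ_succ, hp0, htail]
    ring
  have hperm : ∑ i, (g (p i).2 - f (p i).1) ≤ ∑ i, c (p i).1 (p (σ i)).2 :=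
    calc ∑ i, (g (p i).2 - f (p i).1)
        = ∑ i, (g (p (σ i)).2 - f (p i).1) := by
          simp only [Finset.sum_sub_distrib, Equiv.sum_comp σ fun i => g (p i).2]
      _ ≤ ∑ i, c (p i).1 (p (σ i)).2 :=
          Finset.sum_le_sum fun i _ => h.sub_le _ (hfst i) _ (hsnd (σ i))
  linarith

lemma ne_top_ne_bot_of_mem_cSubdiff {p : X × Y} (hp : p ∈ cSubdiff c ψ) :
    (ψ p.1 ≠ ⊤ ∧ ψ p.1 ≠ ⊥) ∧ cConj c ψ p.2 ≠ ⊤ ∧ cConj c ψ p.2 ≠ ⊥ := by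
  have hsub : cConj c ψ p.2 - ψ p.1 = (c p.1 p.2 : EReal) := hp
  generalize cConj c ψ p.2 = b at hsub ⊢
  generalize ψ p.1 = a at hsub ⊢
  induction a <;> induction b <;> simp [sub_eq_add_neg] at hsub ⊢

lemma mem_cSubdiff_of_forall_le {p : X × Y} {r : ℝ} (hr : ψ p.1 = r)
    (h : ∀ x, ((r + c p.1 p.2 : ℝ) : EReal) ≤ ψ x + (c x p.2 : EReal)) : p ∈ cSubdiff c ψ := by
  have hconj : cConj c ψ p.2 = ((r + c p.1 p.2 : ℝ) : EReal) :=
    le_antisymm (iInf_le_of_le p.1 (by rw [hr, EReal.coe_add])) (le_iInf h)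
  change cConj c ψ p.2 - ψ p.1 = _
  rw [hconj, hr, ← EReal.coe_sub, add_sub_cancel_left]

lemma cConj_sub_le (x : X) (y : Y) : cConj c ψ y - (c x y : EReal) ≤ ψ x := by
  rw [EReal.sub_le_iff_le_add (by simp) (by simp)]
  exact iInf_le _ x

namespace IsKantorovichPotential

lemma coe_toReal (hψ : IsKantorovichPotential c Γ ψ) {x : X} (hx : x ∈ Prod.fst '' Γ) :
    ((ψ x).toReal : EReal) = ψ x := by
  obtain ⟨p, hp, rfl⟩ := hx
  have hfin := (ne_top_ne_bot_of_mem_cSubdiff (hψ.2 hp)).1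
  exact EReal.coe_toReal hfin.1 hfin.2

lemma coe_toReal_cConj (hψ : IsKantorovichPotential c Γ ψ) {y : Y} (hy : y ∈ Prod.snd '' Γ) :
    ((cConj c ψ y).toReal : EReal) = cConj c ψ y := by
  obtain ⟨p, hp, rfl⟩ := hy
  have hfin := (ne_top_ne_bot_of_mem_cSubdiff (hψ.2 hp)).2
  exact EReal.coe_toReal hfin.1 hfin.2

lemma isTightDualPair (hψ : IsKantorovichPotential c Γ ψ) :
    IsTightDualPair c Γ (fun x => (ψ x).toReal) (fun y => (cConj c ψ y).toReal) where
  sub_le x hx y hy := by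
    have hle : cConj c ψ y ≤ ψ x + (c x y : EReal) := iInf_le _ x
    rw [← hψ.coe_toReal hx, ← hψ.coe_toReal_cConj hy] at hle
    norm_cast at hle
    linarith
  sub_eq p hp := by
    have hsub : cConj c ψ p.2 - ψ p.1 = (c p.1 p.2 : EReal) := hψ.2 hp
    rw [← hψ.coe_toReal (mem_image_of_mem _ hp),
      ← hψ.coe_toReal_cConj (mem_image_of_mem _ hp)] at hsub
    exact_mod_cast hsub

end IsKantorovichPotential

lemma CCyclMonotone.sum_le_sum_sub_one (hΓ : CCyclMonotone c Γ) {k : ℕ}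
    {p : Fin (k + 1) → X × Y} (hp : ∀ i, p i ∈ Γ) :
    ∑ i, c (p i).1 (p i).2 ≤ ∑ i, c (p i).1 (p (i - 1)).2 :=
  calc ∑ i, c (p i).1 (p i).2
      = ∑ i, c (p (-i)).1 (p (-i)).2 :=
        (Equiv.sum_comp (Equiv.neg _) fun i => c (p i).1 (p i).2).symm
    _ ≤ ∑ i, c (p (-i)).1 (p (-(i + 1))).2 := hΓ k (fun i => p (-i)) fun i => hp (-i)
    _ = ∑ i, c (p (-i)).1 (p (-i - 1)).2 := by simp only [neg_add']
    _ = ∑ i, c (p i).1 (p (i - 1)).2 :=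
        Equiv.sum_comp (Equiv.neg _) fun i => c (p i).1 (p (i - 1)).2

-- Replacing the first coordinate of `z` by `x` closes the chain up into a cycle.
lemma chainGain_eq_sum_cons (z : X × Y) {k : ℕ} (p : Fin (k + 1) → X × Y) (x : X) :
    let q : Fin (k + 2) → X × Y := Fin.cons (x, z.2) p
    chainGain c z p x =
      c z.1 z.2 - c x z.2 + (∑ i, c (q i).1 (q i).2 - ∑ i, c (q i).1 (q (i - 1)).2) := by
  intro q
  have hzero : (0 : Fin (k + 2)) - 1 = (Fin.last k).succ := by
    rw [sub_eq_iff_eq_add, Fin.succ_last, Fin.last_add_one]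
  have hsucc (i : Fin (k + 1)) : i.succ - 1 = i.castSucc := by
    rw [sub_eq_iff_eq_add, Fin.coeSucc_eq_succ]
  have hdiag : ∑ i, c (q i).1 (q i).2 = c x z.2 + ∑ i, c (p i).1 (p i).2 := by
    simp only [Fin.sum_univ_succ (n := k + 1), q, Fin.cons_zero, Fin.cons_succ]
  have hshift : ∑ i, c (q i).1 (q (i - 1)).2 = c x (p (Fin.last k)).2 +
      (c (p 0).1 z.2 + ∑ i : Fin k, c (p i.succ).1 (p i.castSucc).2) := by
    rw [Fin.sum_univ_succ, Fin.sum_univ_succ]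
    simp only [hzero, hsucc, q, Fin.cons_zero, Fin.cons_succ, Fin.castSucc_zero,
      ← Fin.succ_castSucc]
  rw [hdiag, hshift, chainGain]
  ring

lemma chainGain_snoc (z : X × Y) {k : ℕ} (p : Fin (k + 1) → X × Y) (q : X × Y) (x : X) :
    chainGain c z (Fin.snoc p q : Fin (k + 2) → X × Y) x =
      chainGain c z p q.1 + c q.1 q.2 - c x q.2 := by
  set s : Fin (k + 2) → X × Y := Fin.snoc p q
  have hinit (i : Fin (k + 1)) : s i.castSucc = p i := Fin.snoc_castSucc (α := fun _ => X × Y) ..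
  have hlast : s (Fin.last (k + 1)) = q := Fin.snoc_last (α := fun _ => X × Y) ..
  have hdiag : ∑ i, c (s i).1 (s i).2 = ∑ i, c (p i).1 (p i).2 + c q.1 q.2 := by
    simp only [Fin.sum_univ_castSucc (n := k + 1), hinit, hlast]
  have hlinks : ∑ i : Fin (k + 1), c (s i.succ).1 (s i.castSucc).2 =
      ∑ i : Fin k, c (p i.succ).1 (p i.castSucc).2 + c q.1 (p (Fin.last k)).2 := by
    simp only [Fin.sum_univ_castSucc (n := k), Fin.succ_castSucc, Fin.succ_last, hinit, hlast]
  rw [chainGain, chainGain, hdiag, hlinks, hlast, ← Fin.castSucc_zero, hinit]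
  ring

lemma rockafellar_le_iff {z : X × Y} {x : X} {a : EReal} :
    rockafellar c Γ z x ≤ a ↔ ∀ (k : ℕ) (p : Fin (k + 1) → X × Y), (∀ i, p i ∈ Γ) →
      (chainGain c z p x : EReal) ≤ a := by
  have hgain (k : ℕ) (p : Fin (k + 1) → X × Y) :
      c z.1 z.2 - c (p 0).1 z.2 + ∑ i : Fin (k + 1), (c (p i).1 (p i).2 -
        c (if h : (i : ℕ) + 1 < k + 1 then (p ⟨(i : ℕ) + 1, h⟩).1 else x) (p i).2) =
      chainGain c z p x := by
    rw [Finset.sum_sub_distrib, chainGain]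
    conv_lhs => rw [Fin.sum_univ_castSucc (f := fun i : Fin (k + 1) => c (dite _ _ _) _)]
    simp only [Fin.val_castSucc, Fin.val_last, add_lt_add_iff_right, Fin.is_lt, lt_irrefl,
      dite_true, dite_false, Fin.succ]
    ring
  simp only [rockafellar, iSup_le_iff, hgain]

lemma chainGain_le_rockafellar (z : X × Y) {k : ℕ} {p : Fin (k + 1) → X × Y}
    (hp : ∀ i, p i ∈ Γ) (x : X) : (chainGain c z p x : EReal) ≤ rockafellar c Γ z x :=
  rockafellar_le_iff.1 le_rfl k p hp

lemma rockafellar_ne_bot (hΓ : Γ.Nonempty) (z : X × Y) (x : X) : rockafellar c Γ z x ≠ ⊥ := by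
  obtain ⟨p, hp⟩ := hΓ
  exact ne_bot_of_le_ne_bot (EReal.coe_ne_bot _)
    (chainGain_le_rockafellar (k := 0) (p := fun _ => p) z (fun _ => hp) x)

lemma rockafellar_self (hΓ : CCyclMonotone c Γ) {z : X × Y} (hz : z ∈ Γ) :
    rockafellar c Γ z z.1 = 0 := by
  refine le_antisymm (rockafellar_le_iff.2 fun k p hp => ?_) ?_
  · have hcycle := hΓ.sum_le_sum_sub_one (p := Fin.cons z p) (Fin.cases hz hp)
    rw [chainGain_eq_sum_cons, ← EReal.coe_zero, EReal.coe_le_coe_iff]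
    linarith
  · simpa [chainGain] using
      chainGain_le_rockafellar (c := c) (k := 0) (p := fun _ => z) z (fun _ => hz) z.1

lemma rockafellar_le_add (z : X × Y) {p : X × Y} (hp : p ∈ Γ) (x : X) :
    rockafellar c Γ z p.1 ≤ rockafellar c Γ z x + ((c x p.2 - c p.1 p.2 : ℝ) : EReal) := by
  refine rockafellar_le_iff.2 fun k q hq => ?_
  have hchain := chainGain_le_rockafellar (c := c) (Γ := Γ) (p := Fin.snoc q p) z
    (Fin.lastCases (by simpa using hp) (by simpa using hq)) x
  rw [chainGain_snoc] at hchain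
  calc (chainGain c z q p.1 : EReal)
      = ((chainGain c z q p.1 + c p.1 p.2 - c x p.2 : ℝ) : EReal)
          + ((c x p.2 - c p.1 p.2 : ℝ) : EReal) := by
        rw [← EReal.coe_add]
        ring_nf
    _ ≤ _ := by gcongr

lemma iSup_cConj_rockafellar_sub (z : X × Y) (x : X) :
    ⨆ y, cConj c (rockafellar c Γ z) y - (c x y : EReal) = rockafellar c Γ z x := by
  refine le_antisymm (iSup_le fun y => cConj_sub_le x y)
    (rockafellar_le_iff.2 fun k p hp => le_iSup_of_le (p (Fin.last k)).2 ?_)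
  rw [EReal.le_sub_iff_add_le (by simp) (by simp)]
  refine le_iInf fun w => ?_
  -- A chain gain depends on the endpoint `x` only through the term `c x (p (Fin.last k)).2`.
  calc (chainGain c z p x : EReal) + (c x (p (Fin.last k)).2 : EReal)
      = (chainGain c z p w : EReal) + (c w (p (Fin.last k)).2 : EReal) := by
        rw [← EReal.coe_add, ← EReal.coe_add, chainGain, chainGain]
        ring_nf
    _ ≤ _ := by gcongr; exact chainGain_le_rockafellar z hp w

theorem isKantorovichPotential_rockafellar (hΓ : CCyclMonotone c Γ) {z : X × Y} (hz : z ∈ Γ) :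
    IsKantorovichPotential c Γ (rockafellar c Γ z) := by
  have hbot := rockafellar_ne_bot (c := c) ⟨z, hz⟩ z
  refine ⟨⟨hbot, ⟨z.1, by simp [rockafellar_self hΓ hz]⟩, cConj c (rockafellar c Γ z),
    fun x => (iSup_cConj_rockafellar_sub z x).symm⟩, fun p hp => ?_⟩
  have htop : rockafellar c Γ z p.1 ≠ ⊤ := by
    have hle := rockafellar_le_add (c := c) z hp z.1
    rw [rockafellar_self hΓ hz, zero_add] at hle
    exact ne_top_of_le_ne_top (EReal.coe_ne_top _) hle
  have hcoe := EReal.coe_toReal htop (hbot p.1)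
  refine mem_cSubdiff_of_forall_le hcoe.symm fun x => ?_
  have hle := rockafellar_le_add (c := c) z hp x
  rw [EReal.coe_add, hcoe]
  calc rockafellar c Γ z p.1 + (c p.1 p.2 : EReal)
      ≤ rockafellar c Γ z x + ((c x p.2 - c p.1 p.2 : ℝ) : EReal) + (c p.1 p.2 : EReal) := by
        gcongr
    _ = rockafellar c Γ z x + (c x p.2 : EReal) := by
        rw [add_assoc, ← EReal.coe_add, sub_add_cancel]

lemma rockafellar_le_rateI_add (z : X × Y) (x : X) :
    rockafellar c Γ z x ≤ rateI c Γ (x, z.2) + ((c z.1 z.2 - c x z.2 : ℝ) : EReal) := by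
  refine rockafellar_le_iff.2 fun k p hp => ?_
  rw [chainGain_eq_sum_cons, add_comm, EReal.coe_add]
  gcongr
  refine le_iSup_of_le k <| le_iSup_of_le (Fin.cons (x, z.2) p) <| le_iSup_of_le rfl <|
    le_iSup_of_le ?_ <| le_iSup_of_le (Equiv.subRight 1) le_rfl
  exact Fin.cases (fun h => absurd rfl h) fun i _ => hp i

lemma rockafellar_eq_sub_of_uniqueness (hΓ : CCyclMonotone c Γ)
    (huniq : UniquenessOfPotentials c Γ (Prod.fst '' Γ)) (hψ : IsKantorovichPotential c Γ ψ)
    {z : X × Y} (hz : z ∈ Γ) {x : X} (hx : x ∈ Prod.fst '' Γ) :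
    rockafellar c Γ z x = (((ψ x).toReal - (ψ z.1).toReal : ℝ) : EReal) := by
  have hR := isKantorovichPotential_rockafellar hΓ hz
  have hz₁ : z.1 ∈ Prod.fst '' Γ := mem_image_of_mem _ hz
  have hconst := huniq ψ _ hψ hR x hx z.1 hz₁
  rw [rockafellar_self hΓ hz, ← hψ.coe_toReal hx, ← hψ.coe_toReal hz₁, ← hR.coe_toReal hx,
    sub_zero] at hconst
  rw [← hR.coe_toReal hx]
  norm_cast at hconst ⊢
  linarith

theorem rateI_eq_of_uniqueness (hΓ : CCyclMonotone c Γ)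
    (huniq : UniquenessOfPotentials c Γ (Prod.fst '' Γ)) (hψ : IsKantorovichPotential c Γ ψ)
    {x : X} (hx : x ∈ Prod.fst '' Γ) {y : Y} (hy : y ∈ Prod.snd '' Γ) :
    rateI c Γ (x, y) = ((c x y - (cConj c ψ y).toReal + (ψ x).toReal : ℝ) : EReal) := by
  refine le_antisymm (hψ.isTightDualPair.rateI_le hx hy) ?_
  obtain ⟨z, hz, rfl⟩ := hy
  have htight := hψ.isTightDualPair.sub_eq z hz
  have hle := rockafellar_le_rateI_add (c := c) (Γ := Γ) z x
  rw [rockafellar_eq_sub_of_uniqueness hΓ huniq hψ hz hx,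
    ← EReal.sub_le_iff_le_add (.inl (EReal.coe_ne_bot _)) (.inl (EReal.coe_ne_top _)),
    ← EReal.coe_sub] at hle
  convert hle using 2
  linarith

theorem stmt7_general (hΓ : CCyclMonotone c Γ)
    (huniq : UniquenessOfPotentials c Γ (Prod.fst '' Γ)) :
    (∀ ψ : X → EReal, IsKantorovichPotential c Γ ψ →
      ∀ x ∈ Prod.fst '' Γ, ∀ y ∈ Prod.snd '' Γ,
        rateI c Γ (x, y) = (c x y : EReal) - cConj c ψ y + ψ x) ∧
    (∀ x ∈ Prod.fst '' Γ, ∀ y ∈ Prod.snd '' Γ, rateI c Γ (x, y) < ⊤) ∧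
    (∀ x ∈ Prod.fst '' Γ, ∀ y ∈ Prod.snd '' Γ, ∀ x' ∈ Prod.fst '' Γ, ∀ y' ∈ Prod.snd '' Γ,
      (x', y) ∈ Γ → (x, y') ∈ Γ →
      rateI c Γ (x, y) + rateI c Γ (x', y') =
        ((c x y + c x' y' - c x y' - c x' y : ℝ) : EReal)) := by
  refine ⟨fun ψ hψ x hx y hy => ?_, fun x hx y hy => ?_, fun x hx y hy x' hx' y' hy' h h' => ?_⟩
  · rw [rateI_eq_of_uniqueness hΓ huniq hψ hx hy, EReal.coe_add, EReal.coe_sub,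
      hψ.coe_toReal hx, hψ.coe_toReal_cConj hy]
  · have ⟨z, hz, _⟩ := hx
    rw [rateI_eq_of_uniqueness hΓ huniq (isKantorovichPotential_rockafellar hΓ hz) hx hy]
    exact EReal.coe_lt_top _
  · have hR := isKantorovichPotential_rockafellar hΓ h
    have htight := hR.isTightDualPair.sub_eq _ h
    have htight' := hR.isTightDualPair.sub_eq _ h'
    rw [rateI_eq_of_uniqueness hΓ huniq hR hx hy, rateI_eq_of_uniqueness hΓ huniq hR hx' hy',
      ← EReal.coe_add, EReal.coe_eq_coe_iff]
    linarith

end RateFunction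

/-- under uniqueness of Kantorovich potentials, the rate function is the gap
to the dual potential, is finite on `X₀ × Y₀`, and satisfies the two-point sum identity. -/
theorem stmt7 (c : X → Y → ℝ) (hc : Continuous fun p : X × Y => c p.1 p.2)
    (hc0 : ∀ x y, 0 ≤ c x y)
    (Γ : Set (X × Y)) (hΓne : Γ.Nonempty) (hΓ : CCyclMonotone c Γ)
    (huniq : UniquenessOfPotentials c Γ (Prod.fst '' Γ)) :
    (∀ ψ : X → EReal, IsKantorovichPotential c Γ ψ →
      ∀ x ∈ Prod.fst '' Γ, ∀ y ∈ Prod.snd '' Γ,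
        rateI c Γ (x, y) = (c x y : EReal) - cConj c ψ y + ψ x) ∧
    (∀ x ∈ Prod.fst '' Γ, ∀ y ∈ Prod.snd '' Γ, rateI c Γ (x, y) < ⊤) ∧
    (∀ x ∈ Prod.fst '' Γ, ∀ y ∈ Prod.snd '' Γ, ∀ x' ∈ Prod.fst '' Γ, ∀ y' ∈ Prod.snd '' Γ,
      (x', y) ∈ Γ → (x, y') ∈ Γ →
      rateI c Γ (x, y) + rateI c Γ (x', y') =
        ((c x y + c x' y' - c x y' - c x' y : ℝ) : EReal)) :=
  stmt7_general hΓ huniq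

end Statement

end EOT
end
end

section
/- For (x_0,y_0) ∈ Γ define the Rockafellar antiderivative ψ_{(x_0,y_0)}(x) := sup_{k≥1} sup_{(x_i,y_i)_{i=1}^k ∈ Γ} Σ_{i=0}^k [c(x_i,y_i) − c(x_{i+1},y_i)] with x_{k+1} := x, and set Ψ_{(x_0,y_0)}(x,y) := ψ_{(x_0,y_0)}^c(y) − ψ_{(x_0,y_0)}(x) on X_0 × Y_0. If Ψ_{(x_0,y_0)} does not depend on the choice of (x_0,y_0) ∈ Γ, then uniqueness of Kantorovich potentials holds on X_0: for any c-convex functions ψ_1, ψ_2 on X with Γ ⊂ ∂_c ψ_i (i = 1,2), ψ_1 − ψ_2 is constant on X_0. -/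
open MeasureTheory Filter Topology Set
open scoped ENNReal

noncomputable section

namespace EOT

variable {X Y : Type*}

/-! The Rockafellar antiderivative `R_z` is the least antiderivative of `Γ` vanishing at its base
point: `R_z(x) ≤ ψ(x) - ψ(z.1)` whenever `Γ ⊆ ∂_c ψ`. At the mixed point `(z.1, w.2)` the gap of
`R_w` is at least `c(w) - R_w(z.1)`, and that of `R_z` is at most `R_z(w.1) + c(w)`; if the gaps
agree, then `-R_w(z.1) ≤ R_z(w.1)`. By minimality applied from both base points,
`ψ(w.1) - ψ(z.1) ≤ -R_w(z.1) ≤ R_z(w.1) ≤ ψ(w.1) - ψ(z.1)`, so the increments of `ψ` on `X₀` are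
determined by `Γ`. -/

theorem exists_eq_coe_of_sub_eq_coe {a b : EReal} {r : ℝ} (h : a - b = r) :
    ∃ s : ℝ, b = s ∧ a = s + r := by
  induction b with
  | bot => induction a <;> simp at h
  | coe s => exact ⟨s, rfl, by rw [← h, add_comm, EReal.sub_add_cancel]⟩
  | top => simp at h

theorem sum_dite_succ_sub {G : Type*} [AddCommGroup G] {k : ℕ} (a : Fin (k + 1) → G) (b : G) :
    ∑ i : Fin (k + 1), ((if h : (i : ℕ) + 1 < k + 1 then a ⟨i + 1, h⟩ else b) - a i) =
      b - a 0 := by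
  let F : ℕ → G := fun j => if h : j < k + 1 then a ⟨j, h⟩ else b
  calc _ = ∑ i : Fin (k + 1), (F (i + 1) - F i) :=
        Finset.sum_congr rfl fun i _ => by simp only [F, i.isLt, dite_true]
    _ = F (k + 1) - F 0 := by
        rw [Fin.sum_univ_eq_sum_range (fun j => F (j + 1) - F j), Finset.sum_range_sub]
    _ = b - a 0 := by simp [F]

section Potentials

variable {c : X → Y → ℝ} {Γ : Set (X × Y)} {ψ : X → EReal} {z w : X × Y}

theorem exists_eq_coe_of_mem_cSubdiff (hz : z ∈ cSubdiff c ψ) : ∃ a : ℝ, ψ z.1 = a :=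
  (exists_eq_coe_of_sub_eq_coe hz).imp fun _ => And.left

theorem ne_top_of_mem_cSubdiff (hz : z ∈ cSubdiff c ψ) : ψ z.1 ≠ ⊤ := by
  obtain ⟨a, ha⟩ := exists_eq_coe_of_mem_cSubdiff hz
  exact ha ▸ EReal.coe_ne_top a

theorem add_le_add_of_mem_cSubdiff (hz : z ∈ cSubdiff c ψ) (x : X) :
    ψ z.1 + c z.1 z.2 ≤ ψ x + c x z.2 := by
  obtain ⟨a, hψ, hconj⟩ := exists_eq_coe_of_sub_eq_coe hz
  calc ψ z.1 + c z.1 z.2 = cConj c ψ z.2 := by rw [hψ, hconj]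
    _ ≤ ψ x + c x z.2 := iInf_le _ x

theorem ne_bot_of_mem_cSubdiff (hz : z ∈ cSubdiff c ψ) (x : X) : ψ x ≠ ⊥ := by
  obtain ⟨a, ha⟩ := exists_eq_coe_of_mem_cSubdiff hz
  intro hx
  have h := add_le_add_of_mem_cSubdiff hz x
  rw [ha, hx, EReal.bot_add, le_bot_iff, ← EReal.coe_add] at h
  exact EReal.coe_ne_bot _ h

theorem sub_le_toReal_sub_toReal_of_mem_cSubdiff (hz : z ∈ cSubdiff c ψ) {x : X}
    (hx : ψ x ≠ ⊤) : c z.1 z.2 - c x z.2 ≤ (ψ x).toReal - (ψ z.1).toReal := by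
  have h := add_le_add_of_mem_cSubdiff hz x
  obtain ⟨a, ha⟩ := exists_eq_coe_of_mem_cSubdiff hz
  lift ψ x to ℝ using ⟨hx, ne_bot_of_mem_cSubdiff hz x⟩ with b
  rw [ha] at h ⊢
  norm_cast at h
  simp only [EReal.toReal_coe]
  linarith

theorem rockafellar_le_sub (hψ : Γ ⊆ cSubdiff c ψ) (hz : z ∈ Γ) (x : X) :
    rockafellar c Γ z x ≤ ψ x - ψ z.1 := by
  have hfin {v : X × Y} (hv : v ∈ Γ) : ψ v.1 ≠ ⊤ := ne_top_of_mem_cSubdiff (hψ hv)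
  by_cases hx : ψ x = ⊤
  · rw [hx, EReal.top_sub (hfin hz)]
    exact le_top
  refine iSup_le fun k => iSup_le fun p => iSup_le fun hp => ?_
  let f : X → ℝ := fun y => (ψ y).toReal
  have hsub : ψ x - ψ z.1 = ((f x - f z.1 : ℝ) : EReal) := by
    rw [EReal.coe_sub, EReal.coe_toReal hx (ne_bot_of_mem_cSubdiff (hψ hz) x),
      EReal.coe_toReal (hfin hz) (ne_bot_of_mem_cSubdiff (hψ hz) z.1)]
  have hfirst : c z.1 z.2 - c (p 0).1 z.2 ≤ f (p 0).1 - f z.1 :=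
    sub_le_toReal_sub_toReal_of_mem_cSubdiff (hψ hz) (hfin (hp 0))
  have hstep (i : Fin (k + 1)) :
      c (p i).1 (p i).2 -
          c (if h : (i : ℕ) + 1 < k + 1 then (p ⟨(i : ℕ) + 1, h⟩).1 else x) (p i).2 ≤
        (if h : (i : ℕ) + 1 < k + 1 then f (p ⟨(i : ℕ) + 1, h⟩).1 else f x) - f (p i).1 := by
    split_ifs with h
    · exact sub_le_toReal_sub_toReal_of_mem_cSubdiff (hψ (hp i)) (hfin (hp _))
    · exact sub_le_toReal_sub_toReal_of_mem_cSubdiff (hψ (hp i)) hx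
  rw [hsub, EReal.coe_le_coe_iff]
  calc _ ≤ (f (p 0).1 - f z.1) + (f x - f (p 0).1) :=
        add_le_add hfirst <| (Finset.sum_le_sum fun i _ => hstep i).trans_eq <|
          sum_dite_succ_sub (fun i => f (p i).1) (f x)
    _ = f x - f z.1 := by ring

theorem sub_le_rockafellar (hz : z ∈ Γ) (x : X) :
    ((c z.1 z.2 - c x z.2 : ℝ) : EReal) ≤ rockafellar c Γ z x :=
  le_iSup_of_le 0 <| le_iSup_of_le (fun _ => z) <| le_iSup_of_le (fun _ => hz) <| by simp

theorem rockafellar_self_nonneg (hz : z ∈ Γ) : 0 ≤ rockafellar c Γ z z.1 := by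
  simpa using sub_le_rockafellar (c := c) hz z.1

theorem le_cConj_rockafellar (hz : z ∈ Γ) :
    (c z.1 z.2 : EReal) ≤ cConj c (rockafellar c Γ z) z.2 :=
  le_iInf fun x =>
    calc (c z.1 z.2 : EReal) = ((c z.1 z.2 - c x z.2 : ℝ) : EReal) + c x z.2 := by
          rw [← EReal.coe_add, sub_add_cancel]
      _ ≤ rockafellar c Γ z x + c x z.2 := add_le_add_left (sub_le_rockafellar hz x) _

theorem neg_rockafellar_le_of_gap_le (hz : z ∈ Γ) (hw : w ∈ Γ)
    (hgap : cConj c (rockafellar c Γ w) w.2 - rockafellar c Γ w z.1 ≤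
      cConj c (rockafellar c Γ z) w.2 - rockafellar c Γ z z.1) :
    -rockafellar c Γ w z.1 ≤ rockafellar c Γ z w.1 := by
  refine EReal.addLECancellable_coe (c w.1 w.2) ?_
  calc (c w.1 w.2 : EReal) + -rockafellar c Γ w z.1
      ≤ cConj c (rockafellar c Γ w) w.2 - rockafellar c Γ w z.1 :=
        EReal.sub_le_sub (le_cConj_rockafellar hw) le_rfl
    _ ≤ cConj c (rockafellar c Γ z) w.2 - rockafellar c Γ z z.1 := hgap
    _ ≤ cConj c (rockafellar c Γ z) w.2 - 0 :=
        EReal.sub_le_sub le_rfl (rockafellar_self_nonneg hz)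
    _ = cConj c (rockafellar c Γ z) w.2 := sub_zero _
    _ ≤ rockafellar c Γ z w.1 + c w.1 w.2 := iInf_le _ w.1
    _ = c w.1 w.2 + rockafellar c Γ z w.1 := add_comm _ _

theorem rockafellar_eq_sub_of_gap_le (hψ : Γ ⊆ cSubdiff c ψ) (hz : z ∈ Γ) (hw : w ∈ Γ)
    (hgap : cConj c (rockafellar c Γ w) w.2 - rockafellar c Γ w z.1 ≤
      cConj c (rockafellar c Γ z) w.2 - rockafellar c Γ z z.1) :
    rockafellar c Γ z w.1 = ψ w.1 - ψ z.1 := by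
  refine (rockafellar_le_sub hψ hz w.1).antisymm ?_
  calc ψ w.1 - ψ z.1 = -(ψ z.1 - ψ w.1) := by
        rw [EReal.neg_sub (.inl (ne_bot_of_mem_cSubdiff (hψ hz) z.1))
          (.inl (ne_top_of_mem_cSubdiff (hψ hz))), add_comm, sub_eq_add_neg]
    _ ≤ -rockafellar c Γ w z.1 := EReal.neg_le_neg_iff.2 (rockafellar_le_sub hψ hw z.1)
    _ ≤ rockafellar c Γ z w.1 := neg_rockafellar_le_of_gap_le hz hw hgap

theorem stmt8_general {ψ₁ ψ₂ : X → EReal}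
    (hindep : ∀ z₀ ∈ Γ, ∀ z₁ ∈ Γ, ∀ x ∈ Prod.fst '' Γ, ∀ y ∈ Prod.snd '' Γ,
      cConj c (rockafellar c Γ z₀) y - rockafellar c Γ z₀ x =
        cConj c (rockafellar c Γ z₁) y - rockafellar c Γ z₁ x)
    (h₁ : Γ ⊆ cSubdiff c ψ₁) (h₂ : Γ ⊆ cSubdiff c ψ₂) :
    ∀ x ∈ Prod.fst '' Γ, ∀ x' ∈ Prod.fst '' Γ, ψ₁ x - ψ₂ x = ψ₁ x' - ψ₂ x' := by
  rintro _ ⟨z, hz, rfl⟩ _ ⟨w, hw, rfl⟩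
  have hgap := (hindep w hw z hz z.1 ⟨z, hz, rfl⟩ w.2 ⟨w, hw, rfl⟩).le
  have hincr : ψ₁ w.1 - ψ₁ z.1 = ψ₂ w.1 - ψ₂ z.1 :=
    (rockafellar_eq_sub_of_gap_le h₁ hz hw hgap).symm.trans
      (rockafellar_eq_sub_of_gap_le h₂ hz hw hgap)
  obtain ⟨a₁, ha₁⟩ := exists_eq_coe_of_mem_cSubdiff (h₁ hz)
  obtain ⟨a₂, ha₂⟩ := exists_eq_coe_of_mem_cSubdiff (h₂ hz)
  obtain ⟨b₁, hb₁⟩ := exists_eq_coe_of_mem_cSubdiff (h₁ hw)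
  obtain ⟨b₂, hb₂⟩ := exists_eq_coe_of_mem_cSubdiff (h₂ hw)
  rw [ha₁, ha₂, hb₁, hb₂] at hincr ⊢
  norm_cast at hincr ⊢
  linarith

end Potentials

section Statement

variable {X Y : Type*} [TopologicalSpace X] [TopologicalSpace Y]

/-- if the Rockafellar antiderivative gap `Ψ_{(x₀,y₀)}` does not depend on the
base point, then uniqueness of Kantorovich potentials holds on `X₀`. -/
theorem stmt8 (c : X → Y → ℝ) (hc : Continuous fun p : X × Y => c p.1 p.2)
    (hc0 : ∀ x y, 0 ≤ c x y)
    (Γ : Set (X × Y)) (hΓne : Γ.Nonempty) (hΓ : CCyclMonotone c Γ)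
    (hindep : ∀ z₀ ∈ Γ, ∀ z₁ ∈ Γ, ∀ x ∈ Prod.fst '' Γ, ∀ y ∈ Prod.snd '' Γ,
      cConj c (rockafellar c Γ z₀) y - rockafellar c Γ z₀ x =
        cConj c (rockafellar c Γ z₁) y - rockafellar c Γ z₁ x) :
    UniquenessOfPotentials c Γ (Prod.fst '' Γ) :=
  fun _ _ h₁ h₂ => stmt8_general hindep h₁.2 h₂.2

end Statement

end EOT
end
end

section
/- (Large deviations lower bound under uniqueness of potentials.) Suppose uniqueness of Kantorovich potentials holds on X_0 := proj_X Γ, i.e. for any c-convex functions ψ_1, ψ_2 on X with Γ ⊂ ∂_c ψ_i (i = 1,2), ψ_1 − ψ_2 is constant on X_0. Then for every open set U ⊂ X_0 × Y_0 (where Y_0 := proj_Y Γ), liminf_{ε→0} ε log π_ε(U) ≥ −inf_{(x,y)∈U} I(x,y). -/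
open MeasureTheory Filter Topology Set
open scoped ENNReal

noncomputable section

namespace EOT

variable {X Y : Type*}

/-!
Two-point cyclical invariance factorizes `π_ε = e^{-c/ε} (α_ε ⊗ β_ε)`. Near a point `(a, b)` of
`Γ = spt π_*` the left-hand side is not exponentially small, while it is at most `1` near any
`(a, v)`; comparing the two, `β_ε` near `b` exceeds `β_ε` near `v` by at least
`e^{(c(a,b) - c(a,v))/ε}` up to subexponential factors. Iterating along chains in `Γ` bounds
`liminf ε log π_ε` from below, near a point `(x, y) ∈ X₀ × Y₀`, by a chain potential of Rockafellar
type based at a partner `y'` of `x`. On the other hand `I(x, y)` dominates the chain potential based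
at `y` itself. Both are Kantorovich potentials, and their uniqueness makes the two bounds equal.
-/

section Chains

/-- `IsChainGain c Γ y₀ v t`: some chain `(a₁, b₁), …, (aₖ, bₖ)` in `Γ`, with `b₀ = y₀`, `bₖ = v`
and `k ≥ 0`, has gain `t = ∑ᵢ [c(aᵢ, bᵢ) - c(aᵢ, bᵢ₋₁)]`. These are the sums that enter
Rockafellar's antiderivative, anchored at a point of `Y`. -/
inductive IsChainGain (c : X → Y → ℝ) (Γ : Set (X × Y)) (y₀ : Y) : Y → ℝ → Prop
  | refl : IsChainGain c Γ y₀ y₀ 0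
  | step {v : Y} {t : ℝ} {a : X} {b : Y} : IsChainGain c Γ y₀ v t → (a, b) ∈ Γ →
      IsChainGain c Γ y₀ b (t + (c a b - c a v))

/-- The Rockafellar-type potential `ψ(x) = sup [t - c(x, v)]` over the gains `t` of chains in `Γ`
from `y₀` to `v`. The supremum is taken first over `t` and then over `v`, which exhibits `ψ` as
`c`-convex. -/
def chainPotential (c : X → Y → ℝ) (Γ : Set (X × Y)) (y₀ : Y) (x : X) : EReal :=
  ⨆ v, (⨆ (t : ℝ) (_ : IsChainGain c Γ y₀ v t), (t : EReal)) - (c x v : EReal)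

variable {c : X → Y → ℝ} {Γ : Set (X × Y)}

theorem IsChainGain.exists_path {y v : Y} {t : ℝ} (h : IsChainGain c Γ y v t) (x : X) :
    ∃ (k : ℕ) (p : Fin (k + 1) → X × Y), p 0 = (x, y) ∧ (∀ i, i ≠ 0 → p i ∈ Γ) ∧
      (p (Fin.last k)).2 = v ∧
      (∑ i, c (p i).1 (p i).2) - ∑ i : Fin k, c (p i.succ).1 (p i.castSucc).2 = c x y + t := by
  induction h with
  | refl =>
    exact ⟨0, fun _ => (x, y), rfl, fun i hi => absurd (Fin.fin_one_eq_zero i) hi, rfl, by simp⟩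
  | @step v t a b _ hab ih =>
    obtain ⟨k, p, h_zero, h_mem, h_last, h_sum⟩ := ih
    refine ⟨k + 1, Fin.snoc p (a, b), ?_, ?_, by simp, ?_⟩
    · rw [← Fin.castSucc_zero, Fin.snoc_castSucc, h_zero]
    · refine Fin.lastCases (fun _ => by simpa using hab) fun j hj => ?_
      rw [Fin.snoc_castSucc]
      exact h_mem j fun hj0 => hj (by rw [hj0, Fin.castSucc_zero])
    · have h_split (q : Fin (k + 2) → X × Y) :
          ∑ i : Fin (k + 1), c (q i.succ).1 (q i.castSucc).2 =
            (∑ i : Fin k, c (q i.succ.castSucc).1 (q i.castSucc.castSucc).2) +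
              c (q (Fin.last (k + 1))).1 (q (Fin.last k).castSucc).2 := by
        simp only [Fin.sum_univ_castSucc, Fin.succ_castSucc, Fin.succ_last]
      rw [Fin.sum_univ_castSucc, h_split]
      simp only [Fin.snoc_castSucc, Fin.snoc_last, h_last]
      linarith

theorem sum_finRotate_apply_self {M : Type*} [AddCommMonoid M] {k : ℕ}
    (f : Fin (k + 1) → Fin (k + 1) → M) :
    ∑ i, f (finRotate (k + 1) i) i = (∑ i : Fin k, f i.succ i.castSucc) + f 0 (Fin.last k) := by
  simp only [Fin.sum_univ_castSucc, finRotate_apply, Fin.coeSucc_eq_succ, Fin.last_add_one]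

theorem le_rateI (hΓ : Γ.Nonempty) {k : ℕ} {p : Fin (k + 1) → X × Y} {z : X × Y} (h_zero : p 0 = z)
    (h_mem : ∀ i, i ≠ 0 → p i ∈ Γ) (σ : Equiv.Perm (Fin (k + 1))) :
    (((∑ i, c (p i).1 (p i).2) - ∑ i, c (p i).1 (p (σ i)).2 : ℝ) : EReal) ≤ rateI c Γ z := by
  rcases k with _ | k
  · obtain ⟨q, hq⟩ := hΓ
    have h_mem' : ∀ i, i ≠ 0 → ![z, q] i ∈ Γ :=
      Fin.forall_fin_two.2 ⟨fun h => absurd rfl h, fun _ => hq⟩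
    refine le_iSup_of_le 0 <| le_iSup_of_le ![z, q] <| le_iSup_of_le rfl <|
      le_iSup_of_le h_mem' <| le_iSup_of_le 1 ?_
    simp [Fin.fin_one_eq_zero (σ 0)]
  · exact le_iSup_of_le k <| le_iSup_of_le p <| le_iSup_of_le h_zero <|
      le_iSup_of_le h_mem <| le_iSup_of_le σ le_rfl

theorem IsChainGain.le_rateI (hΓ : Γ.Nonempty) {y v : Y} {t : ℝ} (h : IsChainGain c Γ y v t)
    (x : X) : ((c x y + t - c x v : ℝ) : EReal) ≤ rateI c Γ (x, y) := by
  obtain ⟨k, p, h_zero, h_mem, h_last, h_sum⟩ := h.exists_path x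
  refine le_trans (le_of_eq ?_) (EOT.le_rateI hΓ h_zero h_mem (finRotate (k + 1)).symm)
  have h_shift : ∑ i, c (p i).1 (p ((finRotate (k + 1)).symm i)).2 =
      (∑ i : Fin k, c (p i.succ).1 (p i.castSucc).2) + c x v := by
    rw [← Equiv.sum_comp (finRotate (k + 1))]
    simp only [Equiv.symm_apply_apply]
    rw [sum_finRotate_apply_self fun i j => c (p i).1 (p j).2, h_zero, h_last]
  rw [h_shift, ← sub_sub, h_sum]

theorem IsChainGain.le_chainPotential {y₀ v : Y} {t : ℝ} (h : IsChainGain c Γ y₀ v t) (x : X) :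
    ((t - c x v : ℝ) : EReal) ≤ chainPotential c Γ y₀ x := by
  refine le_iSup_of_le v ?_
  rw [EReal.coe_sub]
  exact EReal.sub_le_sub (le_iSup_of_le t (le_iSup_of_le h le_rfl)) le_rfl

theorem chainPotential_le {y₀ : Y} {x : X} {M : EReal}
    (h : ∀ v t, IsChainGain c Γ y₀ v t → ((t - c x v : ℝ) : EReal) ≤ M) :
    chainPotential c Γ y₀ x ≤ M := by
  refine iSup_le fun v => EReal.sub_le_of_le_add (iSup_le fun t => iSup_le fun ht => ?_)
  have h_le := h v t ht
  rw [EReal.coe_sub] at h_le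
  exact (EReal.sub_le_iff_le_add (.inl (EReal.coe_ne_bot _)) (.inl (EReal.coe_ne_top _))).1 h_le

theorem chainPotential_add_le {y₀ : Y} {x : X} {r : ℝ} {M : EReal}
    (h : ∀ v t, IsChainGain c Γ y₀ v t → ((t - c x v + r : ℝ) : EReal) ≤ M) :
    chainPotential c Γ y₀ x + r ≤ M := by
  refine EReal.add_le_of_le_sub (chainPotential_le fun v t ht => ?_)
  rw [EReal.le_sub_iff_add_le (.inl (EReal.coe_ne_bot _)) (.inl (EReal.coe_ne_top _))]
  exact_mod_cast h v t ht

theorem chainPotential_add_le_rateI (hΓ : Γ.Nonempty) (x : X) (y : Y) :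
    chainPotential c Γ y x + (c x y : EReal) ≤ rateI c Γ (x, y) :=
  chainPotential_add_le fun v t ht => by
    convert ht.le_rateI hΓ x using 2
    ring

theorem chainPotential_add_le_add {y₀ : Y} {a : X} {b : Y} (hab : (a, b) ∈ Γ) (x : X) :
    chainPotential c Γ y₀ a + (c a b : EReal) ≤ chainPotential c Γ y₀ x + (c x b : EReal) :=
  chainPotential_add_le fun v t ht => by
    have h_step := add_le_add_left ((ht.step hab).le_chainPotential x) (c x b : EReal)
    refine le_trans (le_of_eq ?_) h_step
    norm_cast
    ring

theorem chainPotential_ne_bot (y₀ : Y) (x : X) : chainPotential c Γ y₀ x ≠ ⊥ :=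
  ne_bot_of_le_ne_bot (EReal.coe_ne_bot _) (IsChainGain.refl.le_chainPotential x)

theorem chainPotential_eq_neg (h_loop : ∀ y t, IsChainGain c Γ y y t → t ≤ 0) {x : X} {y₀ : Y}
    (hx : (x, y₀) ∈ Γ) : chainPotential c Γ y₀ x = ((-c x y₀ : ℝ) : EReal) := by
  refine le_antisymm (chainPotential_le fun v t ht => ?_) ?_
  · rw [EReal.coe_le_coe_iff]
    linarith [h_loop _ _ (ht.step hx)]
  · simpa using (IsChainGain.refl (c := c) (Γ := Γ) (y₀ := y₀)).le_chainPotential x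

theorem chainPotential_ne_top (h_loop : ∀ y t, IsChainGain c Γ y y t → t ≤ 0) {x a : X} {y₀ b : Y}
    (hx : (x, y₀) ∈ Γ) (hab : (a, b) ∈ Γ) : chainPotential c Γ y₀ a ≠ ⊤ := by
  intro h_top
  have h_le := chainPotential_add_le_add (c := c) (y₀ := y₀) hab x
  rw [h_top, EReal.top_add_coe, chainPotential_eq_neg h_loop hx, ← EReal.coe_add,
    top_le_iff] at h_le
  exact EReal.coe_ne_top _ h_le

theorem isKantorovichPotential_chainPotential (h_loop : ∀ y t, IsChainGain c Γ y y t → t ≤ 0)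
    {x : X} {y₀ : Y} (hx : (x, y₀) ∈ Γ) : IsKantorovichPotential c Γ (chainPotential c Γ y₀) := by
  refine ⟨⟨chainPotential_ne_bot y₀, ⟨x, chainPotential_ne_top h_loop hx hx⟩, _, fun _ => rfl⟩, ?_⟩
  rintro ⟨a, b⟩ hab
  have h_conj : cConj c (chainPotential c Γ y₀) b = chainPotential c Γ y₀ a + (c a b : EReal) :=
    le_antisymm (iInf_le _ a) (le_iInf fun w => chainPotential_add_le_add hab w)
  change cConj c (chainPotential c Γ y₀) b - chainPotential c Γ y₀ a = (c a b : EReal)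
  rw [h_conj]
  have h_fin := chainPotential_ne_top h_loop hx hab
  lift chainPotential c Γ y₀ a to ℝ using ⟨h_fin, chainPotential_ne_bot y₀ a⟩ with ρ
  norm_cast
  ring

theorem UniquenessOfPotentials.neg_chainPotential_add
    (huniq : UniquenessOfPotentials c Γ (Prod.fst '' Γ))
    (h_loop : ∀ y t, IsChainGain c Γ y y t → t ≤ 0) {x x' : X} {y y' : Y}
    (hxy' : (x, y') ∈ Γ) (hx'y : (x', y) ∈ Γ) :
    -(chainPotential c Γ y x + (c x y : EReal)) =
      chainPotential c Γ y' x' + ((c x' y + c x y' - c x y : ℝ) : EReal) := by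
  have h_diff := huniq _ _ (isKantorovichPotential_chainPotential h_loop hx'y)
    (isKantorovichPotential_chainPotential h_loop hxy') x ⟨_, hxy', rfl⟩ x' ⟨_, hx'y, rfl⟩
  rw [chainPotential_eq_neg h_loop hxy', chainPotential_eq_neg h_loop hx'y] at h_diff
  have h_fin := chainPotential_ne_top h_loop hx'y hxy'
  have h_fin' := chainPotential_ne_top h_loop hxy' hx'y
  lift chainPotential c Γ y x to ℝ using ⟨h_fin, chainPotential_ne_bot y x⟩ with ρ
  lift chainPotential c Γ y' x' to ℝ using ⟨h_fin', chainPotential_ne_bot y' x'⟩ with ρ'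
  norm_cast at h_diff ⊢
  linarith

end Chains

section ExponentialScale

/-- The weight `e^{s/ε}`, valued in `ℝ≥0∞` to be compared with measures. -/
def expScale (s ε : ℝ) : ℝ≥0∞ := EReal.exp ((s / ε : ℝ) : EReal)

theorem expScale_add (s t ε : ℝ) : expScale (s + t) ε = expScale s ε * expScale t ε := by
  rw [expScale, add_div, EReal.coe_add, EReal.exp_add, expScale, expScale]

@[simp] theorem expScale_zero (ε : ℝ) : expScale 0 ε = 1 := by simp [expScale]

theorem expScale_mono {s t ε : ℝ} (hε : 0 < ε) (h : s ≤ t) : expScale s ε ≤ expScale t ε :=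
  EReal.exp_monotone (EReal.coe_le_coe_iff.2 (by gcongr))

theorem expScale_sub_le {s t ε : ℝ} {m : ℝ≥0∞} (h : expScale s ε ≤ expScale t ε * m) :
    expScale (s - t) ε ≤ m :=
  calc expScale (s - t) ε = expScale (-t) ε * expScale s ε := by rw [← expScale_add]; congr 1; ring
    _ ≤ expScale (-t) ε * (expScale t ε * m) := by gcongr
    _ = m := by rw [← mul_assoc, ← expScale_add, neg_add_cancel, expScale_zero, one_mul]

theorem coe_le_mul_log_of_expScale_le {s ε : ℝ} {m : ℝ≥0∞} (hε : 0 < ε) (h : expScale s ε ≤ m) :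
    (s : EReal) ≤ ε * ENNReal.log m := by
  have h_log := ENNReal.log_le_log h
  rw [expScale, EReal.log_exp] at h_log
  calc (s : EReal) = ε * ((s / ε : ℝ) : EReal) := by
        rw [← EReal.coe_mul, mul_div_cancel₀ s hε.ne']
    _ ≤ ε * ENNReal.log m := mul_le_mul_of_nonneg_left h_log (EReal.coe_nonneg.2 hε.le)

theorem eventually_expScale_le {s : ℝ} (hs : s < 0) {m : ℝ≥0∞} (hm : 0 < m) :
    ∀ᶠ ε in 𝓝[>] (0 : ℝ), expScale s ε ≤ m := by
  have h_bot : Tendsto (fun ε : ℝ => s / ε) (𝓝[>] (0 : ℝ)) atBot := by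
    simpa only [div_eq_mul_inv] using tendsto_inv_nhdsGT_zero.const_mul_atTop_of_neg hs
  have h_zero := ENNReal.tendsto_ofReal (Real.tendsto_exp_atBot.comp h_bot)
  rw [ENNReal.ofReal_zero] at h_zero
  exact h_zero.eventually_le_const hm

theorem exists_add_eq_of_lt_add {s t t' : ℝ} (h : s < t + t') :
    ∃ u < t, ∃ u' < t', u + u' = s :=
  ⟨(s + t - t') / 2, by linarith, (s - t + t') / 2, by linarith, by ring⟩

theorem TendstoWeakly.eventually_expScale_le {Z : Type*} [TopologicalSpace Z] [MeasurableSpace Z]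
    [OpensMeasurableSpace Z] [HasOuterApproxClosed Z] {π : ℝ → Measure Z}
    [∀ ε, IsProbabilityMeasure (π ε)] {πs : Measure Z} [IsProbabilityMeasure πs]
    (h : TendstoWeakly π πs) {z : Z} (hz : z ∈ mSupport πs) {G : Set Z} (hG : G ∈ 𝓝 z) {s : ℝ}
    (hs : s < 0) : ∀ᶠ ε in 𝓝[>] (0 : ℝ), expScale s ε ≤ π ε G := by
  obtain ⟨V, hVG, hV, hzV⟩ := mem_nhds_iff.1 hG
  let P (ε : ℝ) : ProbabilityMeasure Z := ⟨π ε, inferInstance⟩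
  let P' : ProbabilityMeasure Z := ⟨πs, inferInstance⟩
  have h_tendsto : Tendsto P (𝓝[>] (0 : ℝ)) (𝓝 P') :=
    ProbabilityMeasure.tendsto_iff_forall_integral_tendsto.2 h
  have h_liminf := ProbabilityMeasure.le_liminf_measure_open_of_tendsto h_tendsto hV
  obtain ⟨κ, hκ, hκ_lt⟩ := exists_between (hz V hV hzV)
  filter_upwards [eventually_lt_of_lt_liminf (hκ_lt.trans_le h_liminf),
    EOT.eventually_expScale_le hs hκ] with ε hκV hκs
  exact hκs.trans (hκV.le.trans (measure_mono hVG))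

end ExponentialScale

section Gibbs

variable {c : X → Y → ℝ} {ε : ℝ}

theorem eq_mul_mul_exp_of_cyclic_two {D : X × Y → ℝ} (hD : ∀ z, 0 < D z)
    (h : ∀ (x : Fin 2 → X) (y : Fin 2 → Y), (∏ i, D (x i, y i)) =
      Real.exp (-(1 / ε) * ((∑ i, c (x i) (y i)) - ∑ i, c (x i) (y (i + 1)))) *
        ∏ i, D (x i, y (i + 1))) (x x₁ : X) (y y₁ : Y) :
    D (x, y) = D (x, y₁) * (D (x₁, y) / D (x₁, y₁)) *
      Real.exp ((c x y₁ + (c x₁ y - c x₁ y₁) - c x y) / ε) := by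
  have h_two : D (x, y) * D (x₁, y₁) =
      Real.exp (-(1 / ε) * (c x y + c x₁ y₁ - (c x y₁ + c x₁ y))) *
        (D (x, y₁) * D (x₁, y)) := by
    simpa [Fin.prod_univ_two, Fin.sum_univ_two] using h ![x, x₁] ![y, y₁]
  have h_exponent : -(1 / ε) * (c x y + c x₁ y₁ - (c x y₁ + c x₁ y)) =
      (c x y₁ + (c x₁ y - c x₁ y₁) - c x y) / ε := by ring
  rw [eq_div_of_mul_eq (hD (x₁, y₁)).ne' h_two, h_exponent]
  ring

variable [MeasurableSpace X] [MeasurableSpace Y]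

/-- The Gibbs form `e^{-c/ε} (α ⊗ β)` of an entropic optimal coupling. The factors `α`, `β` absorb
the Schrödinger potentials and need not be finite. -/
def gibbs (c : X → Y → ℝ) (ε : ℝ) (α : Measure X) (β : Measure Y) : Measure (X × Y) :=
  (α.prod β).withDensity fun z => expScale (-c z.1 z.2) ε

theorem measurable_expScale {Z : Type*} [MeasurableSpace Z] {f : Z → ℝ} (hf : Measurable f) :
    Measurable fun z => expScale (f z) ε :=
  EReal.measurable_exp.comp (hf.div_const ε).coe_real_ereal

theorem IsCyclInvariant.exists_eq_gibbs {μ : Measure X} {ν : Measure Y}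
    {π : Measure (X × Y)} (h : IsCyclInvariant c ε μ ν π)
    (hc : Measurable fun p : X × Y => c p.1 p.2) :
    ∃ (f : X → ℝ≥0∞) (g : Y → ℝ≥0∞), π = gibbs c ε (μ.withDensity f) (ν.withDensity g) := by
  obtain ⟨⟨_, h_fst, h_snd⟩, D, hD, hD_pos, rfl, h_cyc⟩ := h
  have : SFinite μ := h_fst ▸ inferInstance
  have : SFinite ν := h_snd ▸ inferInstance
  obtain ⟨x₁, y₁⟩ := nonempty_of_isProbabilityMeasure
    ((μ.prod ν).withDensity fun z => ENNReal.ofReal (D z))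
  let f (x : X) : ℝ≥0∞ := ENNReal.ofReal (D (x, y₁)) * expScale (c x y₁) ε
  let g (y : Y) : ℝ≥0∞ :=
    ENNReal.ofReal (D (x₁, y) / D (x₁, y₁)) * expScale (c x₁ y - c x₁ y₁) ε
  have hf : Measurable f := (hD.comp measurable_prodMk_right).ennreal_ofReal.mul
    (measurable_expScale (hc.comp measurable_prodMk_right))
  have hg : Measurable g := ((hD.comp measurable_prodMk_left).div_const _).ennreal_ofReal.mul
    (measurable_expScale ((hc.comp measurable_prodMk_left).sub_const _))
  have h_density (z : X × Y) :
      ENNReal.ofReal (D z) = f z.1 * g z.2 * expScale (-c z.1 z.2) ε := by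
    have h_pos := (hD_pos (z.1, y₁)).le
    have h_pos' := (div_pos (hD_pos (x₁, z.2)) (hD_pos (x₁, y₁))).le
    rw [eq_mul_mul_exp_of_cyclic_two hD_pos (h_cyc 1) z.1 x₁ z.2 y₁,
      ENNReal.ofReal_mul (mul_nonneg h_pos h_pos'), ENNReal.ofReal_mul h_pos,
      ← EReal.exp_coe, ← expScale, sub_eq_add_neg _ (c z.1 z.2), expScale_add, expScale_add]
    ring
  refine ⟨f, g, ?_⟩
  rw [gibbs, prod_withDensity hf hg,
    ← withDensity_mul _ (by fun_prop) (measurable_expScale hc.fun_neg)]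
  exact congrArg _ (funext h_density)

variable {α : Measure X} {β : Measure Y} [SFinite β] {A : Set X} {B : Set Y} {s : ℝ}

theorem expScale_mul_gibbs_prod_le (hAB : MeasurableSet (A ×ˢ B)) (hε : 0 < ε)
    (h : ∀ p ∈ A ×ˢ B, s ≤ c p.1 p.2) : expScale s ε * gibbs c ε α β (A ×ˢ B) ≤ α A * β B :=
  calc expScale s ε * gibbs c ε α β (A ×ˢ B)
      = expScale s ε * ∫⁻ z in A ×ˢ B, expScale (-c z.1 z.2) ε ∂α.prod β := by
        rw [gibbs, withDensity_apply _ hAB]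
    _ ≤ expScale s ε * ∫⁻ _ in A ×ˢ B, expScale (-s) ε ∂α.prod β := by
        gcongr 1
        exact setLIntegral_mono' hAB fun z hz => expScale_mono hε (neg_le_neg (h z hz))
    _ = α A * β B := by
        rw [setLIntegral_const, ← mul_assoc, ← expScale_add, add_neg_cancel, expScale_zero, one_mul,
          Measure.prod_prod]

theorem mul_le_expScale_mul_gibbs_prod (hAB : MeasurableSet (A ×ˢ B)) (hε : 0 < ε)
    (h : ∀ p ∈ A ×ˢ B, c p.1 p.2 ≤ s) : α A * β B ≤ expScale s ε * gibbs c ε α β (A ×ˢ B) :=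
  calc α A * β B = expScale s ε * ∫⁻ _ in A ×ˢ B, expScale (-s) ε ∂α.prod β := by
        rw [setLIntegral_const, ← mul_assoc, ← expScale_add, add_neg_cancel, expScale_zero, one_mul,
          Measure.prod_prod]
    _ ≤ expScale s ε * ∫⁻ z in A ×ˢ B, expScale (-c z.1 z.2) ε ∂α.prod β := by
        gcongr 1
        exact setLIntegral_mono' hAB fun z hz => expScale_mono hε (neg_le_neg (h z hz))
    _ = expScale s ε * gibbs c ε α β (A ×ˢ B) := by rw [gibbs, withDensity_apply _ hAB]

end Gibbs

section LogRatio

variable [MeasurableSpace X] [MeasurableSpace Y] [TopologicalSpace X] [TopologicalSpace Y]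
  {c : X → Y → ℝ}

theorem exists_nhds_expScale_mul_gibbs_le [OpensMeasurableSpace (X × Y)]
    (hc : Continuous fun p : X × Y => c p.1 p.2) {a : X} {b : Y} {N : Set X} (hN : N ∈ 𝓝 a)
    {B : Set Y} (hB : B ∈ 𝓝 b) {s : ℝ} (hs : s < c a b) :
    ∃ G ∈ 𝓝 (a, b), ∀ ε > 0, ∀ (α : Measure X) (β : Measure Y) [SFinite β],
      expScale s ε * gibbs c ε α β G ≤ α N * β B := by
  have h_nhds : N ×ˢ B ∩ {p : X × Y | s < c p.1 p.2} ∈ 𝓝 (a, b) :=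
    inter_mem (prod_mem_nhds hN hB) (hc.continuousAt.eventually_const_lt hs)
  obtain ⟨N', B', hN', ha, hB', hb, h_sub⟩ := mem_nhds_prod_iff'.1 h_nhds
  refine ⟨N' ×ˢ B', prod_mem_nhds (hN'.mem_nhds ha) (hB'.mem_nhds hb), fun ε hε α β _ => ?_⟩
  refine (expScale_mul_gibbs_prod_le (hN'.prod hB').measurableSet hε
    fun p hp => (h_sub hp).2.le).trans ?_
  gcongr
  · exact fun x hx => (h_sub (mk_mem_prod hx hb)).1.1
  · exact fun y hy => (h_sub (mk_mem_prod ha hy)).1.2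

theorem exists_nhds_mul_le_expScale_mul_gibbs [OpensMeasurableSpace (X × Y)]
    (hc : Continuous fun p : X × Y => c p.1 p.2) {a : X} {b : Y} {U : Set (X × Y)}
    (hU : U ∈ 𝓝 (a, b)) {s : ℝ} (hs : c a b < s) :
    ∃ N ∈ 𝓝 a, ∃ B ∈ 𝓝 b, ∀ ε > 0, ∀ (α : Measure X) (β : Measure Y) [SFinite β],
      α N * β B ≤ expScale s ε * gibbs c ε α β U := by
  have h_nhds : U ∩ {p : X × Y | c p.1 p.2 < s} ∈ 𝓝 (a, b) :=
    inter_mem hU (hc.continuousAt.eventually_lt_const hs)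
  obtain ⟨N, B, hN, ha, hB, hb, h_sub⟩ := mem_nhds_prod_iff'.1 h_nhds
  refine ⟨N, hN.mem_nhds ha, B, hB.mem_nhds hb, fun ε hε α β _ => ?_⟩
  refine (mul_le_expScale_mul_gibbs_prod (hN.prod hB).measurableSet hε
    fun p hp => (h_sub hp).2.le).trans ?_
  gcongr
  exact h_sub.trans inter_subset_left

/-- `LogRatioGE β y v t`: as `ε → 0`, the mass of `β ε` near `v` is at least `e^{t/ε}` times its
mass near `y`, up to factors `e^{-δ/ε}`. Neighbourhoods of `y` are chosen after those of `v`, so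
that the relation composes. -/
def LogRatioGE (β : ℝ → Measure Y) (y v : Y) (t : ℝ) : Prop :=
  ∀ s < t, ∀ B ∈ 𝓝 v, ∃ A ∈ 𝓝 y, ∀ᶠ ε in 𝓝[>] (0 : ℝ), expScale s ε * β ε A ≤ β ε B

variable {α : ℝ → Measure X} {β : ℝ → Measure Y}

theorem LogRatioGE.refl (β : ℝ → Measure Y) (y : Y) : LogRatioGE β y y 0 := by
  intro s hs B hB
  refine ⟨B, hB, eventually_mem_nhdsWithin.mono fun ε hε => mul_le_of_le_one_left' ?_⟩
  simpa only [expScale_zero] using expScale_mono hε hs.le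

theorem LogRatioGE.trans {y v w : Y} {t t' : ℝ} (h : LogRatioGE β y v t)
    (h' : LogRatioGE β v w t') : LogRatioGE β y w (t + t') := by
  intro s hs C hC
  obtain ⟨u, hu, u', hu', rfl⟩ := exists_add_eq_of_lt_add hs
  obtain ⟨B, hB, hBC⟩ := h' u' hu' C hC
  obtain ⟨A, hA, hAB⟩ := h u hu B hB
  refine ⟨A, hA, ?_⟩
  filter_upwards [hBC, hAB] with ε hBC hAB
  calc expScale (u + u') ε * β ε A = expScale u' ε * (expScale u ε * β ε A) := by
        rw [add_comm, expScale_add, mul_assoc]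
    _ ≤ expScale u' ε * β ε B := by gcongr
    _ ≤ β ε C := hBC

variable [OpensMeasurableSpace (X × Y)] [HasOuterApproxClosed (X × Y)] {π : ℝ → Measure (X × Y)}
  [∀ ε, IsProbabilityMeasure (π ε)] {πs : Measure (X × Y)} [IsProbabilityMeasure πs]
  [∀ ε, SFinite (β ε)]

theorem eventually_expScale_le_mul (hc : Continuous fun p : X × Y => c p.1 p.2)
    (hπ : ∀ ε > 0, π ε = gibbs c ε (α ε) (β ε)) (hconv : TendstoWeakly π πs) {a : X} {b : Y}
    (hab : (a, b) ∈ mSupport πs) {N : Set X} (hN : N ∈ 𝓝 a) {B : Set Y} (hB : B ∈ 𝓝 b) {s : ℝ}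
    (hs : s < c a b) : ∀ᶠ ε in 𝓝[>] (0 : ℝ), expScale s ε ≤ α ε N * β ε B := by
  obtain ⟨m, hsm, hm⟩ := exists_between hs
  obtain ⟨G, hG, h_le⟩ := exists_nhds_expScale_mul_gibbs_le hc hN hB hm
  filter_upwards [hconv.eventually_expScale_le hab hG (sub_neg.2 hsm), self_mem_nhdsWithin]
    with ε h_mass hε
  calc expScale s ε = expScale m ε * expScale (s - m) ε := by
        rw [← expScale_add, add_sub_cancel]
    _ ≤ expScale m ε * gibbs c ε (α ε) (β ε) G := by
        rw [← hπ ε hε]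
        gcongr
    _ ≤ α ε N * β ε B := h_le ε hε (α ε) (β ε)

theorem logRatioGE_of_mem_mSupport (hc : Continuous fun p : X × Y => c p.1 p.2)
    (hπ : ∀ ε > 0, π ε = gibbs c ε (α ε) (β ε)) (hconv : TendstoWeakly π πs) {a : X} {b : Y}
    (hab : (a, b) ∈ mSupport πs) (v : Y) : LogRatioGE β v b (c a b - c a v) := by
  intro s hs B hB
  obtain ⟨u, hu, u', hu', rfl⟩ := exists_add_eq_of_lt_add (sub_eq_add_neg (c a b) _ ▸ hs)
  obtain ⟨N, hN, A, hA, h_le⟩ := exists_nhds_mul_le_expScale_mul_gibbs hc univ_mem (lt_neg.2 hu')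
  refine ⟨A, hA, ?_⟩
  filter_upwards [eventually_expScale_le_mul hc hπ hconv hab hN hB hu, self_mem_nhdsWithin]
    with ε h_NB hε
  have h_NA : α ε N * β ε A ≤ expScale (-u') ε := by
    simpa only [← hπ ε hε, measure_univ, mul_one] using h_le ε hε (α ε) (β ε)
  calc expScale (u + u') ε * β ε A = expScale u' ε * (expScale u ε * β ε A) := by
        rw [add_comm, expScale_add, mul_assoc]
    _ ≤ expScale u' ε * (α ε N * β ε B * β ε A) := by gcongr
    _ = expScale u' ε * (α ε N * β ε A) * β ε B := by ring
    _ ≤ expScale u' ε * expScale (-u') ε * β ε B := by gcongr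
    _ = β ε B := by rw [← expScale_add, add_neg_cancel, expScale_zero, one_mul]

theorem IsChainGain.logRatioGE (hc : Continuous fun p : X × Y => c p.1 p.2)
    (hπ : ∀ ε > 0, π ε = gibbs c ε (α ε) (β ε)) (hconv : TendstoWeakly π πs) {y v : Y} {t : ℝ}
    (h : IsChainGain c (mSupport πs) y v t) : LogRatioGE β y v t := by
  induction h with
  | refl => exact .refl β y
  | step _ hab ih => exact ih.trans (logRatioGE_of_mem_mSupport hc hπ hconv hab _)

theorem LogRatioGE.le_liminf (hc : Continuous fun p : X × Y => c p.1 p.2)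
    (hπ : ∀ ε > 0, π ε = gibbs c ε (α ε) (β ε)) (hconv : TendstoWeakly π πs) {x : X} {y y' : Y}
    {t : ℝ} (h : LogRatioGE β y' y t) (hxy' : (x, y') ∈ mSupport πs) {U : Set (X × Y)}
    (hU : U ∈ 𝓝 (x, y)) : ((t + c x y' - c x y : ℝ) : EReal) ≤
      liminf (fun ε : ℝ => (ε : EReal) * ENNReal.log (π ε U)) (𝓝[>] (0 : ℝ)) := by
  refine EReal.ge_of_forall_gt_iff_ge.1 fun s hs => ?_
  rw [EReal.coe_lt_coe_iff, sub_eq_add_neg] at hs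
  obtain ⟨r, hr, w, hw, rfl⟩ := exists_add_eq_of_lt_add hs
  obtain ⟨u, hu, m, hm, rfl⟩ := exists_add_eq_of_lt_add hr
  obtain ⟨N, hN, B, hB, h_U⟩ := exists_nhds_mul_le_expScale_mul_gibbs hc hU (lt_neg.2 hw)
  obtain ⟨A, hA, h_AB⟩ := h u hu B hB
  refine le_liminf_of_le (by isBoundedDefault) ?_
  filter_upwards [h_AB, eventually_expScale_le_mul hc hπ hconv hxy' hN hA hm, self_mem_nhdsWithin]
    with ε h_AB h_NA hε
  refine coe_le_mul_log_of_expScale_le hε ?_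
  rw [← sub_neg_eq_add]
  refine expScale_sub_le ?_
  calc expScale (u + m) ε = expScale u ε * expScale m ε := expScale_add u m ε
    _ ≤ expScale u ε * (α ε N * β ε A) := by gcongr
    _ = α ε N * (expScale u ε * β ε A) := by ring
    _ ≤ α ε N * β ε B := by gcongr
    _ ≤ expScale (-w) ε * π ε U := hπ ε hε ▸ h_U ε hε (α ε) (β ε)

theorem IsChainGain.nonpos_of_loop (hc : Continuous fun p : X × Y => c p.1 p.2)
    (hπ : ∀ ε > 0, π ε = gibbs c ε (α ε) (β ε)) (hconv : TendstoWeakly π πs) {y : Y} {t : ℝ}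
    (h : IsChainGain c (mSupport πs) y y t) : t ≤ 0 := by
  cases h with
  | refl => exact le_rfl
  | @step v s a _ h_vs hay =>
    have h_le := ((h_vs.step hay).logRatioGE hc hπ hconv).le_liminf hc hπ hconv hay univ_mem
    simp only [measure_univ, ENNReal.log_one, mul_zero, liminf_const, add_sub_cancel_right] at h_le
    exact EReal.coe_nonpos.1 h_le

theorem neg_rateI_le_liminf (hc : Continuous fun p : X × Y => c p.1 p.2)
    (hπ : ∀ ε > 0, π ε = gibbs c ε (α ε) (β ε)) (hconv : TendstoWeakly π πs)
    (huniq : UniquenessOfPotentials c (mSupport πs) (Prod.fst '' mSupport πs)) {z : X × Y}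
    (hz : z ∈ (Prod.fst '' mSupport πs) ×ˢ (Prod.snd '' mSupport πs)) {U : Set (X × Y)}
    (hU : U ∈ 𝓝 z) : -rateI c (mSupport πs) z ≤
      liminf (fun ε : ℝ => (ε : EReal) * ENNReal.log (π ε U)) (𝓝[>] (0 : ℝ)) := by
  obtain ⟨⟨⟨x, y'⟩, hxy', h_fst⟩, ⟨⟨x', y⟩, hx'y, h_snd⟩⟩ := hz
  obtain rfl : (x, y) = z := Prod.ext h_fst h_snd
  calc -rateI c (mSupport πs) (x, y)
      ≤ -(chainPotential c (mSupport πs) y x + (c x y : EReal)) :=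
        EReal.neg_le_neg_iff.2 (chainPotential_add_le_rateI ⟨_, hxy'⟩ x y)
    _ = chainPotential c (mSupport πs) y' x' + ((c x' y + c x y' - c x y : ℝ) : EReal) :=
        huniq.neg_chainPotential_add (fun _ _ h => h.nonpos_of_loop hc hπ hconv) hxy' hx'y
    _ ≤ liminf (fun ε : ℝ => (ε : EReal) * ENNReal.log (π ε U)) (𝓝[>] (0 : ℝ)) :=
        chainPotential_add_le fun v t ht => by
          convert ((ht.step hx'y).logRatioGE hc hπ hconv).le_liminf hc hπ hconv hxy' hU using 2
          ring

theorem stmt9_general (μ : Measure X) (ν : Measure Y) (c : X → Y → ℝ)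
    (hc : Continuous fun p : X × Y => c p.1 p.2) (πε : ℝ → Measure (X × Y))
    [∀ ε, IsProbabilityMeasure (πε ε)] (hπε : ∀ ε, 0 < ε → IsCyclInvariant c ε μ ν (πε ε))
    (πs : Measure (X × Y)) [IsProbabilityMeasure πs] (hconv : TendstoWeakly πε πs)
    (huniq : UniquenessOfPotentials c (mSupport πs) (Prod.fst '' mSupport πs)) (U : Set (X × Y))
    (hU : IsOpen U) :
    -(⨅ z ∈ U ∩ (Prod.fst '' mSupport πs) ×ˢ (Prod.snd '' mSupport πs),
        rateI c (mSupport πs) z) ≤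
      liminf (fun (ε : ℝ) => (ε : EReal) * ENNReal.log (πε ε U)) (𝓝[>] (0 : ℝ)) := by
  have : SFinite ν := (hπε 1 one_pos).1.2.2 ▸ inferInstance
  choose! f g hfg using fun ε hε => (hπε ε hε).exists_eq_gibbs hc.measurable
  refine EReal.neg_le.2 (le_iInf₂ fun z hz => EReal.neg_le.2 ?_)
  exact neg_rateI_le_liminf hc hfg hconv huniq hz.2 (hU.mem_nhds hz.1)

end LogRatio

section Statement

variable {X Y : Type*}
  [MeasurableSpace X] [MetricSpace X] [PolishSpace X] [BorelSpace X]
  [MeasurableSpace Y] [MetricSpace Y] [PolishSpace Y] [BorelSpace Y]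

/-- large deviations lower bound under uniqueness of Kantorovich potentials. -/
theorem stmt9 (μ : Measure X) (ν : Measure Y)
    [IsProbabilityMeasure μ] [IsProbabilityMeasure ν]
    (c : X → Y → ℝ) (hc : Continuous fun p : X × Y => c p.1 p.2) (hc0 : ∀ x y, 0 ≤ c x y)
    (πε : ℝ → Measure (X × Y)) [∀ ε, IsProbabilityMeasure (πε ε)]
    (hπε : ∀ ε, 0 < ε → IsCyclInvariant c ε μ ν (πε ε))
    (πs : Measure (X × Y)) (hπs : IsCoupling μ ν πs) (hconv : TendstoWeakly πε πs)
    (huniq : UniquenessOfPotentials c (mSupport πs) (Prod.fst '' mSupport πs)) :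
    ∀ U : Set (X × Y), IsOpen U →
      U ⊆ (Prod.fst '' mSupport πs) ×ˢ (Prod.snd '' mSupport πs) →
      -(⨅ z ∈ U, rateI c (mSupport πs) z) ≤
        liminf (fun (ε : ℝ) => (ε : EReal) * ENNReal.log (πε ε U)) (𝓝[>] (0 : ℝ)) := by
  intro U hU hUsub
  have := hπs.1
  simpa only [inter_eq_left.2 hUsub] using stmt9_general μ ν c hc πε hπε πs hconv huniq U hU

end Statement

end EOT
end
end

section
/- Suppose Γ = graph T for a map T: X_0 → Y, X_0 is arcwise connected (any two points of X_0 are joined by a continuous curve of finite length in X_0), and for every compact K ⊂ X_0 one has |c(x_1,T(x_1)) + c(x_2,T(x_2)) − c(x_1,T(x_2)) − c(x_2,T(x_1))| = o(d(x_1,x_2)) uniformly over x_1, x_2 ∈ K. If (x,y), (x',y') ∈ X_0 × Y_0 are such that (x',y) ∈ Γ and (x,y') ∈ Γ, then I(x,y) + I(x',y') ≥ c(x,y) + c(x',y') − c(x,y') − c(x',y). -/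
/-
Take a curve in `X₀` from `x` to `x'`, lift it to `Γ` with endpoints `(x, y')` and `(x', y)`, and
choose a fine partition. To bound `I(x, y)` from below, traverse the intermediate points from `x`
to `x'`; for `I(x', y')`, traverse them backwards. In the sum of the two bounds, everything except
the two-point expression pairs up into the exchange gains of consecutive partition points. Each
gain is at least `-η` times the distance of the two points, so together they lose at most `η` times
the length of the curve, and `η` is arbitrary.
-/

open MeasureTheory Filter Topology Set
open scoped ENNReal

noncomputable section

namespace EOT

variable {X Y : Type*}

/-- The gain `c(p) + c(q) − c(p.1, q.2) − c(q.1, p.2)` in total cost when `p` and `q` exchange their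
second coordinates: the elementary term both of the regularity assumption and of the two-point
inequality. -/
def exchangeGain (c : X → Y → ℝ) (p q : X × Y) : ℝ :=
  c p.1 p.2 + c q.1 q.2 - c p.1 q.2 - c q.1 p.2

/-- Exchanging second coordinates between two points of `Λ` raises the cost by at most `o(d)`,
uniformly in `Λ`, where `d` is the distance of the first coordinates: a one-sided form of the
theorem's regularity assumption, in which `Λ` may have several points over one first coordinate. -/
def ExchangeRegularOn [PseudoMetricSpace X] (c : X → Y → ℝ) (Λ : Set (X × Y)) : Prop :=
  ∀ η > (0 : ℝ), ∃ δ > (0 : ℝ), ∀ p ∈ Λ, ∀ q ∈ Λ, dist p.1 q.1 < δ →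
    -(η * dist p.1 q.1) ≤ exchangeGain c p q

theorem ExchangeRegularOn.mono [PseudoMetricSpace X] {c : X → Y → ℝ} {Λ Λ' : Set (X × Y)}
    (h : ExchangeRegularOn c Λ) (hΛ : Λ' ⊆ Λ) : ExchangeRegularOn c Λ' := fun η hη ↦
  (h η hη).imp fun _ hδ ↦ ⟨hδ.1, fun p hp q hq ↦ hδ.2 p (hΛ hp) q (hΛ hq)⟩

theorem exchangeRegularOn_of_graph [PseudoMetricSpace X] {c : X → Y → ℝ} {Γ : Set (X × Y)}
    {T : X → Y} {K : Set X} (hgraph : ∀ p ∈ Γ, p.2 = T p.1)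
    (hreg : ∀ η > (0 : ℝ), ∃ δ > (0 : ℝ), ∀ x₁ ∈ K, ∀ x₂ ∈ K, dist x₁ x₂ < δ →
      |exchangeGain c (x₁, T x₁) (x₂, T x₂)| ≤ η * dist x₁ x₂) :
    ExchangeRegularOn c (Γ ∩ Prod.fst ⁻¹' K) := by
  intro η hη
  obtain ⟨δ, hδ, hgain⟩ := hreg η hη
  refine ⟨δ, hδ, ?_⟩
  rintro ⟨x₁, y₁⟩ ⟨h₁, hx₁⟩ ⟨x₂, y₂⟩ ⟨h₂, hx₂⟩ hdist
  obtain rfl : y₁ = T x₁ := hgraph _ h₁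
  obtain rfl : y₂ = T x₂ := hgraph _ h₂
  exact neg_le_of_abs_le (hgain x₁ hx₁ x₂ hx₂ hdist)

section Cycles

variable {c : X → Y → ℝ} {Γ : Set (X × Y)}

theorem cycle_le_rateI (x : X) (y : Y) {k : ℕ} {z : Fin (k + 1) → X × Y} (hz : ∀ i, z i ∈ Γ) :
    ((c x y + ∑ i, c (z i).1 (z i).2 - (c x (z 0).2 +
      ∑ i : Fin k, c (z i.castSucc).1 (z i.succ).2 + c (z (Fin.last k)).1 y) : ℝ) : EReal) ≤
      rateI c Γ (x, y) := by
  let p : Fin (k + 2) → X × Y := Fin.cons (x, y) z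
  have hp : ∀ i, i ≠ 0 → p i ∈ Γ := Fin.cases (fun h ↦ (h rfl).elim) fun i _ ↦ hz i
  have hdiag : ∑ i, c (p i).1 (p i).2 = c x y + ∑ i, c (z i).1 (z i).2 :=
    Fin.sum_univ_succ _
  have hshift : ∑ i, c (p i).1 (p (finRotate (k + 2) i)).2 = c x (z 0).2 +
      ∑ i : Fin k, c (z i.castSucc).1 (z i.succ).2 + c (z (Fin.last k)).1 y := by
    have hrotate : ∀ i : Fin k, finRotate (k + 2) i.castSucc.succ = i.succ.succ := fun i ↦ by
      rw [finRotate_apply, Fin.succ_castSucc, Fin.coeSucc_eq_succ]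
    rw [Fin.sum_univ_succ, Fin.sum_univ_castSucc, ← add_assoc]
    simp only [hrotate, finRotate_apply_zero, Fin.succ_last, finRotate_last]
    rfl
  rw [← hdiag, ← hshift]
  exact le_iSup_of_le k <| le_iSup_of_le p <| le_iSup_of_le rfl <| le_iSup_of_le hp <|
    le_iSup_of_le (finRotate (k + 2)) le_rfl

theorem reverse_cycle_le_rateI (x : X) (y : Y) {k : ℕ} {z : Fin (k + 1) → X × Y}
    (hz : ∀ i, z i ∈ Γ) :
    ((c x y + ∑ i, c (z i).1 (z i).2 - (c x (z (Fin.last k)).2 +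
      ∑ i : Fin k, c (z i.succ).1 (z i.castSucc).2 + c (z 0).1 y) : ℝ) : EReal) ≤
      rateI c Γ (x, y) := by
  have h := cycle_le_rateI (c := c) x y (z := z ∘ Fin.rev) fun i ↦ hz i.rev
  have hdiag : ∑ i : Fin (k + 1), c (z i.rev).1 (z i.rev).2 = ∑ i, c (z i).1 (z i).2 :=
    Equiv.sum_comp Fin.revPerm fun i ↦ c (z i).1 (z i).2
  have hlink : ∑ i : Fin k, c (z i.rev.succ).1 (z i.rev.castSucc).2 =
      ∑ i : Fin k, c (z i.succ).1 (z i.castSucc).2 :=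
    Equiv.sum_comp Fin.revPerm fun i : Fin k ↦ c (z i.succ).1 (z i.castSucc).2
  simpa only [Function.comp_apply, Fin.rev_castSucc, Fin.rev_succ, Fin.rev_zero, Fin.rev_last,
    hdiag, hlink] using h

theorem exchangeGain_add_sum_le_rateI_add_rateI {z : ℕ → X × Y} (hz : ∀ i, z i ∈ Γ) (k : ℕ) :
    ((exchangeGain c ((z 0).1, (z (k + 2)).2) ((z (k + 2)).1, (z 0).2) +
      ∑ i ∈ Finset.range (k + 2), exchangeGain c (z i) (z (i + 1)) : ℝ) : EReal) ≤
      rateI c Γ ((z 0).1, (z (k + 2)).2) + rateI c Γ ((z (k + 2)).1, (z 0).2) := by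
  let w : Fin (k + 1) → X × Y := fun i ↦ z (i + 1)
  have hw : ∀ i, w i ∈ Γ := fun i ↦ hz (i + 1)
  refine le_of_eq_of_le ?_ (add_le_add (cycle_le_rateI (c := c) (z 0).1 (z (k + 2)).2 hw)
    (reverse_cycle_le_rateI (c := c) (z (k + 2)).1 (z 0).2 hw))
  have hfirst (f : ℕ → ℝ) : ∑ i ∈ Finset.range (k + 2), f i =
      f 0 + ∑ i : Fin (k + 1), f (i + 1) := by
    rw [Finset.sum_range_succ', add_comm, Finset.sum_range]
  have hlast (f : ℕ → ℝ) : ∑ i ∈ Finset.range (k + 2), f i =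
      ∑ i : Fin (k + 1), f i + f (k + 1) := by
    rw [Finset.sum_range_succ, Finset.sum_range]
  have hends (f : ℕ → ℝ) : ∑ i ∈ Finset.range (k + 2), f i =
      f 0 + ∑ i : Fin k, f (i + 1) + f (k + 1) := by
    rw [hfirst, Fin.sum_univ_castSucc, ← add_assoc]
    rfl
  rw [← EReal.coe_add, EReal.coe_eq_coe_iff]
  simp only [exchangeGain, Finset.sum_sub_distrib, Finset.sum_add_distrib]
  rw [hfirst fun i ↦ c (z i).1 (z i).2, hlast fun i ↦ c (z (i + 1)).1 (z (i + 1)).2,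
    hends fun i ↦ c (z i).1 (z (i + 1)).2, hends fun i ↦ c (z (i + 1)).1 (z i).2]
  simp only [w, Fin.val_zero, Fin.val_last, Fin.val_castSucc, Fin.val_succ]
  ring

end Cycles

theorem exists_lift_of_mem_image_fst {α : Type*} {Γ : Set (X × Y)} {φ : α → X} {s : Set α}
    (hφ : ∀ t ∈ s, φ t ∈ Prod.fst '' Γ) {a b : α} (hab : a ≠ b) (has : a ∈ s) (hbs : b ∈ s)
    {y y' : Y} (ha : (φ a, y) ∈ Γ) (hb : (φ b, y') ∈ Γ) :
    ∃ ψ : α → Y, (∀ t ∈ s, (φ t, ψ t) ∈ Γ) ∧ ψ a = y ∧ ψ b = y' := by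
  have hlift : ∀ t ∈ s, ∃ v, (φ t, v) ∈ Γ ∧ (t = a → v = y) ∧ (t = b → v = y') := by
    intro t ht
    rcases eq_or_ne t a with rfl | hta
    · exact ⟨y, ha, fun _ ↦ rfl, fun htb ↦ (hab htb).elim⟩
    rcases eq_or_ne t b with rfl | htb
    · exact ⟨y', hb, fun hta' ↦ (hta hta').elim, fun _ ↦ rfl⟩
    obtain ⟨⟨_, v⟩, hv, rfl⟩ := hφ t ht
    exact ⟨v, hv, fun hta' ↦ (hta hta').elim, fun htb' ↦ (htb htb').elim⟩
  have : Nonempty Y := ⟨y⟩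
  choose! ψ hψ hψa hψb using hlift
  exact ⟨ψ, hψ, hψa a has rfl, hψb b hbs rfl⟩

section Curves

variable {E : Type*} [PseudoMetricSpace E] {φ : ℝ → E} {a b : ℝ}

theorem exists_monotone_partition_dist_lt (hab : a ≤ b) (hφ : ContinuousOn φ (Icc a b)) {δ : ℝ}
    (hδ : 0 < δ) :
    ∃ u : ℕ → ℝ, Monotone u ∧ (∀ i, u i ∈ Icc a b) ∧ u 0 = a ∧ (∀ᶠ i in atTop, u i = b) ∧
      ∀ i, dist (φ (u i)) (φ (u (i + 1))) < δ := by
  let U : E → Set (Icc a b) := fun v ↦ (Icc a b).domRestrict φ ⁻¹' Metric.ball v (δ / 2)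
  have hU : ∀ v, IsOpen (U v) := fun v ↦ Metric.isOpen_ball.preimage hφ.domRestrict
  have hcover : univ ⊆ ⋃ v, U v := fun t _ ↦
    mem_iUnion.2 ⟨φ t, Metric.mem_ball_self (half_pos hδ)⟩
  obtain ⟨t, ht₀, ht, ⟨n, hn⟩, htU⟩ := exists_monotone_Icc_subset_open_cover_Icc hab hU hcover
  refine ⟨fun i ↦ t i, ht, fun i ↦ (t i).2, ht₀, eventually_atTop.2 ⟨n, hn⟩, fun i ↦ ?_⟩
  obtain ⟨v, hv⟩ := htU i
  have hi : dist (φ (t i)) v < δ / 2 := hv (left_mem_Icc.2 (ht i.le_succ))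
  have hi' : dist (φ (t (i + 1))) v < δ / 2 := hv (right_mem_Icc.2 (ht i.le_succ))
  calc dist (φ (t i)) (φ (t (i + 1)))
      ≤ dist (φ (t i)) v + dist (φ (t (i + 1))) v := dist_triangle_right _ _ _
    _ < δ := by linarith

theorem sum_dist_le_eVariationOn_toReal {α : Type*} [LinearOrder α] {f : α → E} {s : Set α}
    (hf : BoundedVariationOn f s) {u : ℕ → α} (hu : Monotone u) (hus : ∀ i, u i ∈ s) (n : ℕ) :
    ∑ i ∈ Finset.range n, dist (f (u i)) (f (u (i + 1))) ≤ (eVariationOn f s).toReal := by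
  have hsum := ENNReal.toReal_mono hf (eVariationOn.sum_le (n := n) hu hus)
  rw [ENNReal.toReal_sum fun i _ ↦ edist_ne_top _ _] at hsum
  simpa only [← dist_edist, dist_comm] using hsum

end Curves

section TwoPoint

variable [PseudoMetricSpace X] {c : X → Y → ℝ} {Γ : Set (X × Y)} {φ : ℝ → X} {ψ : ℝ → Y} {a b : ℝ}

theorem exchangeGain_sub_le_rateI_add_rateI_of_curve (hab : a ≤ b)
    (hφ : ContinuousOn φ (Icc a b)) (hφv : BoundedVariationOn φ (Icc a b))
    (hΓ : ∀ t ∈ Icc a b, (φ t, ψ t) ∈ Γ)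
    (hreg : ExchangeRegularOn c ((fun t ↦ (φ t, ψ t)) '' Icc a b)) {η : ℝ} (hη : 0 < η) :
    ((exchangeGain c (φ a, ψ b) (φ b, ψ a) - η * (eVariationOn φ (Icc a b)).toReal : ℝ) : EReal) ≤
      rateI c Γ (φ a, ψ b) + rateI c Γ (φ b, ψ a) := by
  obtain ⟨δ, hδ, hgain⟩ := hreg η hη
  obtain ⟨u, hu, hu_mem, hua, hub, hu_dist⟩ := exists_monotone_partition_dist_lt hab hφ hδ
  obtain ⟨k, hk⟩ := ((tendsto_add_atTop_nat 2).eventually hub).exists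
  let z : ℕ → X × Y := fun i ↦ (φ (u i), ψ (u i))
  have hsum : -(η * (eVariationOn φ (Icc a b)).toReal) ≤
      ∑ i ∈ Finset.range (k + 2), exchangeGain c (z i) (z (i + 1)) := calc
    -(η * (eVariationOn φ (Icc a b)).toReal)
      ≤ -(η * ∑ i ∈ Finset.range (k + 2), dist (φ (u i)) (φ (u (i + 1)))) := by
        gcongr
        exact sum_dist_le_eVariationOn_toReal hφv hu hu_mem (k + 2)
    _ = ∑ i ∈ Finset.range (k + 2), -(η * dist (φ (u i)) (φ (u (i + 1)))) := by
        rw [Finset.mul_sum, Finset.sum_neg_distrib]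
    _ ≤ ∑ i ∈ Finset.range (k + 2), exchangeGain c (z i) (z (i + 1)) :=
        Finset.sum_le_sum fun i _ ↦ hgain _ (mem_image_of_mem _ (hu_mem i)) _
          (mem_image_of_mem _ (hu_mem (i + 1))) (hu_dist i)
  have hchain := exchangeGain_add_sum_le_rateI_add_rateI (c := c) (z := z)
    (fun i ↦ hΓ (u i) (hu_mem i)) k
  simp only [z, hua, hk] at hchain
  refine le_trans (EReal.coe_le_coe_iff.2 ?_) hchain
  linarith only [hsum]

theorem exchangeGain_le_rateI_add_rateI_of_curve (hab : a ≤ b)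
    (hφ : ContinuousOn φ (Icc a b)) (hφv : BoundedVariationOn φ (Icc a b))
    (hΓ : ∀ t ∈ Icc a b, (φ t, ψ t) ∈ Γ)
    (hreg : ExchangeRegularOn c ((fun t ↦ (φ t, ψ t)) '' Icc a b)) :
    (exchangeGain c (φ a, ψ b) (φ b, ψ a) : EReal) ≤
      rateI c Γ (φ a, ψ b) + rateI c Γ (φ b, ψ a) := by
  set G := exchangeGain c (φ a, ψ b) (φ b, ψ a)
  set V := (eVariationOn φ (Icc a b)).toReal
  have hlim : Tendsto (fun η : ℝ ↦ ((G - η * V : ℝ) : EReal)) (𝓝[>] 0) (𝓝 G) := by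
    have hcont : Continuous fun η : ℝ ↦ G - η * V := by fun_prop
    exact EReal.tendsto_coe.2 (by simpa using hcont.tendsto 0 |>.mono_left nhdsWithin_le_nhds)
  exact le_of_tendsto hlim <| eventually_mem_nhdsWithin.mono fun η hη ↦
    exchangeGain_sub_le_rateI_add_rateI_of_curve hab hφ hφv hΓ hreg hη

theorem stmt10_general {x x' : X} {y y' : Y}
    (harc : ∃ φ : ℝ → X, ContinuousOn φ (Icc 0 1) ∧ (∀ t ∈ Icc (0 : ℝ) 1, φ t ∈ Prod.fst '' Γ) ∧
      φ 0 = x ∧ φ 1 = x' ∧ eVariationOn φ (Icc 0 1) ≠ ⊤)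
    (hreg : ∀ K : Set X, K ⊆ Prod.fst '' Γ → IsCompact K →
      ExchangeRegularOn c (Γ ∩ Prod.fst ⁻¹' K))
    (hx'y : (x', y) ∈ Γ) (hxy' : (x, y') ∈ Γ) :
    (exchangeGain c (x, y) (x', y') : EReal) ≤ rateI c Γ (x, y) + rateI c Γ (x', y') := by
  obtain ⟨φ, hφ, hφΓ, rfl, rfl, hφv⟩ := harc
  obtain ⟨ψ, hψ, rfl, rfl⟩ := exists_lift_of_mem_image_fst hφΓ zero_ne_one
    (left_mem_Icc.2 zero_le_one) (right_mem_Icc.2 zero_le_one) hxy' hx'y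
  refine exchangeGain_le_rateI_add_rateI_of_curve zero_le_one hφ hφv hψ ?_
  refine (hreg (φ '' Icc 0 1) (image_subset_iff.2 hφΓ)
    (isCompact_Icc.image_of_continuousOn hφ)).mono ?_
  rintro _ ⟨t, ht, rfl⟩
  exact ⟨hψ t ht, mem_image_of_mem φ ht⟩

end TwoPoint

section Statement

variable {X Y : Type*} [MetricSpace X] [MetricSpace Y]

/-- the two-point sum inequality under the regularity assumption. -/
theorem stmt10 (c : X → Y → ℝ) (hc : Continuous fun p : X × Y => c p.1 p.2)
    (hc0 : ∀ x y, 0 ≤ c x y)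
    (Γ : Set (X × Y)) (hΓne : Γ.Nonempty) (hΓ : CCyclMonotone c Γ)
    (T : X → Y) (hgraph : ∀ p ∈ Γ, p.2 = T p.1)
    (harc : ∀ x ∈ Prod.fst '' Γ, ∀ x' ∈ Prod.fst '' Γ,
      ∃ φ : ℝ → X, ContinuousOn φ (Icc 0 1) ∧
        (∀ t ∈ Icc (0 : ℝ) 1, φ t ∈ Prod.fst '' Γ) ∧
        φ 0 = x ∧ φ 1 = x' ∧ eVariationOn φ (Icc 0 1) ≠ ⊤)
    (hreg : ∀ K : Set X, K ⊆ Prod.fst '' Γ → IsCompact K →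
      ∀ η > (0 : ℝ), ∃ δ > (0 : ℝ), ∀ x₁ ∈ K, ∀ x₂ ∈ K, dist x₁ x₂ < δ →
        |c x₁ (T x₁) + c x₂ (T x₂) - c x₁ (T x₂) - c x₂ (T x₁)| ≤ η * dist x₁ x₂)
    (x x' : X) (y y' : Y)
    (hx : x ∈ Prod.fst '' Γ) (hy : y ∈ Prod.snd '' Γ)
    (hx' : x' ∈ Prod.fst '' Γ) (hy' : y' ∈ Prod.snd '' Γ)
    (hx'y : (x', y) ∈ Γ) (hxy' : (x, y') ∈ Γ) :
    ((c x y + c x' y' - c x y' - c x' y : ℝ) : EReal) ≤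
      rateI c Γ (x, y) + rateI c Γ (x', y') := by
  exact stmt10_general (harc x hx x' hx')
    (fun K hKX hK ↦ exchangeRegularOn_of_graph hgraph (hreg K hKX hK)) hx'y hxy'

end Statement

end EOT
end
end
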